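/- Let p ∈ [2, 18/5) and let (u, w, b, Π) be a smooth solution of the stationary magneto-micropolar equations on ℝ³. Then there exists a constant C > 0 (depending only on p) such that for all R > 2: ∫_{B_{R/2}} (|∇u|² + |∇b|² + |∇w|²) dx ≤ C [ R^{1 − 6/p} N² + R^{5 − 18/p} N⁶ + R^{2 − 9/p} N³ ], where N := ‖u‖_{L^p(B_{2R})} + ‖b‖_{L^p(B_{2R})} + ‖w‖_{L^p(B_{2R})}. -/

import Mathlib

open MeasureTheory Real Filter Metric
open scoped Topology ENNReal

noncomputable section

/-- Three-dimensional Euclidean space. -/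
abbrev E3 := EuclideanSpace ℝ (Fin 3)

/-- Partial derivative in the `i`-th coordinate direction. -/
def pd (i : Fin 3) (f : E3 → ℝ) (x : E3) : ℝ := fderiv ℝ f x (EuclideanSpace.single i 1)

/-- Laplacian of a scalar function. -/
def lap (f : E3 → ℝ) (x : E3) : ℝ := ∑ i, pd i (fun y => pd i f y) x

/-- Divergence of a vector field. -/
def vdiv (v : E3 → E3) (x : E3) : ℝ := ∑ i, pd i (fun y => v y i) x

/-- Curl of a vector field on ℝ³. -/
def curl3 (v : E3 → E3) (x : E3) : Fin 3 → ℝ :=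
  ![pd 1 (fun y => v y 2) x - pd 2 (fun y => v y 1) x,
    pd 2 (fun y => v y 0) x - pd 0 (fun y => v y 2) x,
    pd 0 (fun y => v y 1) x - pd 1 (fun y => v y 0) x]

/-- Squared norm of the full gradient of a vector field: |∇v|² = Σᵢⱼ (∂ᵢ vⱼ)². -/
def gradSq (v : E3 → E3) (x : E3) : ℝ := ∑ j, ∑ i, (pd i (fun y => v y j) x) ^ 2

/-- The open ball of radius `r` centered at the origin. -/
def ball3 (r : ℝ) : Set E3 := Metric.ball (0 : E3) r

/-- `(u, w, b, Π)` is a smooth solution of the stationary magneto-micropolar equations on ℝ³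
(with all physical constants set to 1):
−Δu + (u·∇)u + ∇Π = ∇×w + (b·∇)b; −Δw + (u·∇)w = ∇(div w) + ∇×u − 2w;
−Δb + (u·∇)b = (b·∇)u; div u = 0, div b = 0. -/
structure IsMMPSolution (u w b : E3 → E3) (P : E3 → ℝ) : Prop where
  smooth_u : ContDiff ℝ (⊤ : ℕ∞) u
  smooth_w : ContDiff ℝ (⊤ : ℕ∞) w
  smooth_b : ContDiff ℝ (⊤ : ℕ∞) b
  smooth_P : ContDiff ℝ (⊤ : ℕ∞) P
  eq_u : ∀ x : E3, ∀ j : Fin 3,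
    -(lap (fun y => u y j) x) + (∑ i, u x i * pd i (fun y => u y j) x) + pd j P x
      = curl3 w x j + ∑ i, b x i * pd i (fun y => b y j) x
  eq_w : ∀ x : E3, ∀ j : Fin 3,
    -(lap (fun y => w y j) x) + (∑ i, u x i * pd i (fun y => w y j) x)
      = pd j (fun y => vdiv w y) x + curl3 u x j - 2 * w x j
  eq_b : ∀ x : E3, ∀ j : Fin 3,
    -(lap (fun y => b y j) x) + (∑ i, u x i * pd i (fun y => b y j) x)
      = ∑ i, b x i * pd i (fun y => u y j) x
  div_u : ∀ x : E3, vdiv u x = 0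
  div_b : ∀ x : E3, vdiv b x = 0

/-- The `Lᵖ` norm of a vector field over a set `S` (for `p` a positive real). -/
def lpnorm (p : ℝ) (v : E3 → E3) (S : Set E3) : ℝ := (∫ x in S, ‖v x‖ ^ p) ^ (1 / p)

/-- Smoothness over `ℝ`. -/
notation "SmoothFn" => ContDiff ℝ ((⊤ : ℕ∞) : WithTop ℕ∞)

section PartialDerivatives

variable {f g : E3 → ℝ}

theorem smoothFn_differentiableAt (hf : SmoothFn f) (x : E3) : DifferentiableAt ℝ f x :=
  (hf.differentiable (by simp)) x

@[fun_prop]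
theorem smoothFn_pd (i : Fin 3) (hf : SmoothFn f) : SmoothFn (fun x => pd i f x) := by
  unfold pd
  exact (hf.fderiv_right (m := ((⊤ : ℕ∞) : WithTop ℕ∞)) (by simp)).clm_apply contDiff_const

@[fun_prop]
theorem smoothFn_coord (i : Fin 3) : SmoothFn (fun x : E3 => x i) := by
  fun_prop

theorem pd_coord (i j : Fin 3) (x : E3) : pd i (fun y : E3 => y j) x = if i = j then 1 else 0 := by
  have h : HasFDerivAt (fun y : E3 => y j) (EuclideanSpace.proj (𝕜 := ℝ) j : E3 →L[ℝ] ℝ) x :=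
    (EuclideanSpace.proj (𝕜 := ℝ) j : E3 →L[ℝ] ℝ).hasFDerivAt
  simp [pd, h.fderiv, eq_comm]

theorem pd_const (i : Fin 3) (c : ℝ) (x : E3) : pd i (fun _ => c) x = 0 := by
  simp [pd]

theorem pd_add (i : Fin 3) (hf : SmoothFn f) (hg : SmoothFn g) (x : E3) :
    pd i (fun y => f y + g y) x = pd i f x + pd i g x := by
  simp only [pd]
  rw [fderiv_fun_add (smoothFn_differentiableAt hf x) (smoothFn_differentiableAt hg x)]
  rfl

theorem pd_neg (i : Fin 3) (f : E3 → ℝ) (x : E3) :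
    pd i (fun y => - f y) x = - pd i f x := by
  simp only [pd]
  rw [fderiv_fun_neg]
  rfl

theorem pd_sub (i : Fin 3) (hf : SmoothFn f) (hg : SmoothFn g) (x : E3) :
    pd i (fun y => f y - g y) x = pd i f x - pd i g x := by
  simp only [pd]
  rw [fderiv_fun_sub (smoothFn_differentiableAt hf x) (smoothFn_differentiableAt hg x)]
  rfl

theorem pd_mul (i : Fin 3) (hf : SmoothFn f) (hg : SmoothFn g) (x : E3) :
    pd i (fun y => f y * g y) x = pd i f x * g x + f x * pd i g x := by
  simp only [pd]
  rw [fderiv_fun_mul (smoothFn_differentiableAt hf x) (smoothFn_differentiableAt hg x)]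
  simp
  ring

theorem pd_const_mul (i : Fin 3) (c : ℝ) (hf : SmoothFn f) (x : E3) :
    pd i (fun y => c * f y) x = c * pd i f x := by
  rw [pd_mul i contDiff_const hf, pd_const]
  ring

theorem pd_comm (i j : Fin 3) (hf : SmoothFn f) (x : E3) :
    pd i (fun y => pd j f y) x = pd j (fun y => pd i f y) x := by
  have hs : IsSymmSndFDerivAt ℝ f x := hf.contDiffAt.isSymmSndFDerivAt (by
    simp only [minSmoothness_of_isRCLikeNormedField]
    exact WithTop.coe_le_coe.2 le_top)
  have hd : DifferentiableAt ℝ (fderiv ℝ f) x :=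
    (hf.fderiv_right (m := ((⊤ : ℕ∞) : WithTop ℕ∞)) (by simp)).differentiable (by simp) x
  have key : ∀ k l : Fin 3, pd k (fun y => pd l f y) x =
      fderiv ℝ (fderiv ℝ f) x (EuclideanSpace.single k 1) (EuclideanSpace.single l 1) := by
    intro k l
    simp only [pd]
    rw [fderiv_clm_apply hd (differentiableAt_const _)]
    simp
  rw [key, key]
  exact hs.eq _ _

theorem fderiv_apply_eq_sum_pd (f : E3 → ℝ) (x v : E3) :
    fderiv ℝ f x v = ∑ k, v k * pd k f x := by
  have hv : v = ∑ k, v k • (EuclideanSpace.single k (1 : ℝ) : E3) := by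
    ext j
    simp [Fin.sum_univ_three]
    fin_cases j <;> simp
  conv_lhs => rw [hv]
  rw [map_sum]
  simp [pd]

theorem pd_comp_affine (i : Fin 3) (hf : SmoothFn f) (t : ℝ) (c x : E3) :
    pd i (fun y => f (t • y + c)) x = t * pd i f (t • x + c) := by
  have h1 : HasFDerivAt (fun y : E3 => t • y + c) (t • ContinuousLinearMap.id ℝ E3) x :=
    ((hasFDerivAt_id x).const_smul t).add_const c
  have h2 : HasFDerivAt (fun y => f (t • y + c))
      ((fderiv ℝ f (t • x + c)).comp (t • ContinuousLinearMap.id ℝ E3)) x :=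
    (smoothFn_differentiableAt hf (t • x + c)).hasFDerivAt.comp x h1
  simp [pd, h2.fderiv]

theorem pd_eq_zero_of_notMem_tsupport (i : Fin 3) {x : E3} (hx : x ∉ tsupport f) :
    pd i f x = 0 := by
  have : fderiv ℝ f x = 0 := by
    by_contra h
    exact hx (support_fderiv_subset ℝ h)
  simp [pd, this]

theorem hasCompactSupport_pd (i : Fin 3) (hf : HasCompactSupport f) :
    HasCompactSupport (fun x => pd i f x) :=
  hf.fderiv_apply ℝ _

theorem integral_pd_eq_zero (i : Fin 3) (hf : SmoothFn f) (hc : HasCompactSupport f) :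
    ∫ x, pd i f x = 0 := by
  have h := integral_mul_fderiv_eq_neg_fderiv_mul_of_integrable (𝕜 := ℝ) (μ := (volume : Measure E3))
    (f := fun _ : E3 => (1 : ℝ)) (g := f) (v := EuclideanSpace.single i (1 : ℝ))
    (by simp) ?_ ?_ (fun x _ => by fun_prop) (fun x _ => smoothFn_differentiableAt hf x)
  · simpa [pd] using h
  · simpa [pd] using (smoothFn_pd i hf).continuous.integrable_of_hasCompactSupport
      (hasCompactSupport_pd i hc)
  · simpa using hf.continuous.integrable_of_hasCompactSupport hc

theorem integral_mul_pd (i : Fin 3) (hf : SmoothFn f) (hg : SmoothFn g)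
    (hc : HasCompactSupport f) :
    ∫ x, f x * pd i g x = - ∫ x, pd i f x * g x := by
  have h := integral_pd_eq_zero i (hf.mul hg) (hc.mul_right (f' := g))
  have h1 : Integrable (fun x => pd i f x * g x) :=
    ((smoothFn_pd i hf).continuous.mul hg.continuous).integrable_of_hasCompactSupport
      (hasCompactSupport_pd i hc).mul_right
  have h2 : Integrable (fun x => f x * pd i g x) :=
    (hf.continuous.mul (smoothFn_pd i hg).continuous).integrable_of_hasCompactSupport
      hc.mul_right
  have h3 : ∫ x, pd i (fun y => f y * g y) x = 0 := h
  simp_rw [pd_mul i hf hg] at h3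
  rw [integral_add h1 h2] at h3
  linarith

end PartialDerivatives

theorem integrableOn_closedBall {f : E3 → ℝ} (hf : Continuous f) (r : ℝ) :
    IntegrableOn f (closedBall (0 : E3) r) :=
  hf.continuousOn.integrableOn_compact (isCompact_closedBall _ _)

theorem setIntegral_mono_closedBall {f g : E3 → ℝ} (hf : Continuous f) (hg : Continuous g)
    {r : ℝ} (h : ∀ x ∈ closedBall (0 : E3) r, f x ≤ g x) :
    ∫ x in closedBall (0 : E3) r, f x ≤ ∫ x in closedBall (0 : E3) r, g x :=
  setIntegral_mono_on (integrableOn_closedBall hf r) (integrableOn_closedBall hg r)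
    measurableSet_closedBall h

theorem setIntegral_comp_affine_le {H : E3 → ℝ} (hH : Continuous H) (h0 : ∀ x, 0 ≤ H x)
    {S : Set E3} (hS : MeasurableSet S) {s t : ℝ} (ht : 0 < t) (c : E3)
    (hmem : ∀ x ∈ S, t • x + c ∈ closedBall (0 : E3) s) :
    ∫ x in S, H (t • x + c) ≤ (t ^ 3)⁻¹ * ∫ y in closedBall (0 : E3) s, H y := by
  set I : E3 → ℝ := (closedBall (0 : E3) s).indicator H with hI
  have hIint : Integrable I :=
    (integrable_indicator_iff measurableSet_closedBall).2 (integrableOn_closedBall hH s)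
  have h1 : ∫ x, I (t • x + c) = (t ^ 3)⁻¹ * ∫ y in closedBall (0 : E3) s, H y := by
    rw [Measure.integral_comp_smul volume (fun z => I (z + c)) t, integral_add_right_eq_self I c,
      hI, integral_indicator measurableSet_closedBall]
    simp [abs_of_pos ht]
  rw [← h1, ← integral_indicator hS]
  refine integral_mono_of_nonneg (.of_forall fun x => ?_) ?_ (.of_forall fun x => ?_)
  · exact Set.indicator_nonneg (fun _ _ => h0 _) x
  · have := (hIint.comp_add_right c).comp_smul ht.ne'
    simpa using this
  · by_cases hx : x ∈ S
    · simp [hx, hI, Set.indicator_of_mem (hmem x hx)]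
    · simp only [hx, not_false_eq_true, Set.indicator_of_notMem]
      exact Set.indicator_nonneg (fun _ _ => h0 _) _

theorem continuous_setIntegral_closedBall {X : Type*} [TopologicalSpace X]
    [FirstCountableTopology X] [LocallyCompactSpace X]
    {f : X → E3 → ℝ} (hf : Continuous f.uncurry) (r : ℝ) :
    Continuous fun y => ∫ x in closedBall (0 : E3) r, f y x :=
  continuous_parametric_integral_of_continuous hf (isCompact_closedBall _ _)

theorem integrableOn_prod_closedBall {f : E3 → E3 → ℝ} (hf : Continuous f.uncurry) (r s : ℝ) :
    Integrable f.uncurry ((volume.restrict (closedBall (0 : E3) r)).prod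
      (volume.restrict (closedBall (0 : E3) s))) := by
  rw [Measure.prod_restrict]
  exact hf.continuousOn.integrableOn_compact
    ((isCompact_closedBall _ _).prod (isCompact_closedBall _ _))

theorem setIntegral_swap_closedBall {f : E3 → E3 → ℝ} (hf : Continuous f.uncurry) (r s : ℝ) :
    ∫ x in closedBall (0 : E3) r, ∫ a in closedBall (0 : E3) s, f x a
      = ∫ a in closedBall (0 : E3) s, ∫ x in closedBall (0 : E3) r, f x a :=
  integral_integral_swap (integrableOn_prod_closedBall hf r s)

theorem eq_zero_of_tsupport_subset {f : E3 → ℝ} {S : Set E3} (hf : tsupport f ⊆ S) {x : E3}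
    (hx : x ∉ S) : f x = 0 :=
  image_eq_zero_of_notMem_tsupport fun h => hx (hf h)

theorem pd_eq_zero_of_tsupport_subset {f : E3 → ℝ} {S : Set E3} (hf : tsupport f ⊆ S) {x : E3}
    (hx : x ∉ S) (i : Fin 3) : pd i f x = 0 :=
  pd_eq_zero_of_notMem_tsupport i fun h => hx (hf h)

theorem hasCompactSupport_of_tsupport_subset {f : E3 → ℝ} {r : ℝ}
    (hf : tsupport f ⊆ closedBall (0 : E3) r) : HasCompactSupport f :=
  (isCompact_closedBall _ _).of_isClosed_subset (isClosed_tsupport f) hf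

theorem abs_coord_le_norm (x : E3) (k : Fin 3) : |x k| ≤ ‖x‖ := by
  simpa using PiLp.norm_apply_le x k

theorem affine_mem_closedBall {σ t : ℝ} (hσ : 1 ≤ σ) (ht0 : 0 ≤ t) (ht1 : t ≤ 1) {x a : E3}
    (hx : x ∈ closedBall (0 : E3) σ) (ha : a ∈ closedBall (0 : E3) 1) :
    t • x + (1 - t) • a ∈ closedBall (0 : E3) σ :=
  convex_closedBall (0 : E3) σ hx (closedBall_subset_closedBall hσ ha) ht0 (by linarith) (by ring)

/-- Integration by parts over a closed ball containing the support of `f`. -/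
theorem setIntegral_mul_pd {f g : E3 → ℝ} {r : ℝ} (i : Fin 3) (hf : SmoothFn f)
    (hg : SmoothFn g) (hs : tsupport f ⊆ closedBall (0 : E3) r) :
    ∫ x in closedBall (0 : E3) r, f x * pd i g x
      = - ∫ x in closedBall (0 : E3) r, pd i f x * g x := by
  rw [setIntegral_eq_integral_of_forall_compl_eq_zero (fun x hx => by
      rw [eq_zero_of_tsupport_subset hs hx, zero_mul]),
    setIntegral_eq_integral_of_forall_compl_eq_zero (fun x hx => by
      rw [pd_eq_zero_of_tsupport_subset hs hx, zero_mul])]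
  exact integral_mul_pd i hf hg (hasCompactSupport_of_tsupport_subset hs)

/-- Pairing of a cutoff `g` with the `t`-slice of the segment average of `∂ⱼF`. -/
def segmentPairing (ρ g F : E3 → ℝ) (σ : ℝ) (j k : Fin 3) (t : ℝ) : ℝ :=
  ∫ a in closedBall (0 : E3) 1, ∫ x in closedBall (0 : E3) σ,
    ρ a * (g x * ((x k - a k) * pd j F (t • x + (1 - t) • a)))

section SegmentPairing

variable {ρ g F : E3 → ℝ} {σ : ℝ} {j k : Fin 3} {t : ℝ}

theorem continuous_segmentPairing (hρ : SmoothFn ρ) (hg : SmoothFn g) (hF : SmoothFn F) :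
    Continuous (segmentPairing ρ g F σ j k) := by
  have hFc := (smoothFn_pd j hF).continuous
  have hρc := hρ.continuous
  have hgc := hg.continuous
  unfold segmentPairing
  refine continuous_setIntegral_closedBall ?_ 1
  have : Continuous fun p : ℝ × E3 => ∫ x in closedBall (0 : E3) σ,
      ρ p.2 * (g x * ((x k - p.2 k) * pd j F (p.1 • x + (1 - p.1) • p.2))) := by
    refine continuous_setIntegral_closedBall ?_ σ
    simp only [Function.uncurry_def]
    fun_prop
  exact this

theorem abs_segmentPairing_le_near_one (hρ : SmoothFn ρ) (hρ0 : ∀ a, 0 ≤ ρ a)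
    (hρ1 : ∫ a in closedBall (0 : E3) 1, ρ a = 1)
    (hσ : 1 ≤ σ) (hg : SmoothFn g) (hgs : tsupport g ⊆ closedBall (0 : E3) σ)
    (hF : SmoothFn F) {D F2 : ℝ} (hD : 0 < D) (hF2 : 0 < F2)
    (hDb : ∀ a ∈ closedBall (0 : E3) 1,
      ∫ x in closedBall (0 : E3) σ, (pd j (fun y => g y * (y k - a k)) x) ^ 2 ≤ D ^ 2)
    (hFb : ∫ x in closedBall (0 : E3) σ, (F x) ^ 2 ≤ F2 ^ 2)
    (ht : 1 / 2 ≤ t) (ht1 : t ≤ 1) :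
    |segmentPairing ρ g F σ j k t| ≤ 9 * (D * F2) := by
  have ht0 : 0 < t := by linarith
  have hFc := hF.continuous
  have inner : ∀ a ∈ closedBall (0 : E3) 1,
      |∫ x in closedBall (0 : E3) σ, g x * ((x k - a k) * pd j F (t • x + (1 - t) • a))|
        ≤ 9 * (D * F2) := by
    intro a ha
    set G : E3 → ℝ := fun y => g y * (y k - a k) with hG
    have hGs : SmoothFn G := by fun_prop
    have hGt : tsupport G ⊆ closedBall (0 : E3) σ :=
      (tsupport_mul_subset_left (f := g) (g := fun y => y k - a k)).trans hgs
    have hGc := (smoothFn_pd j hGs).continuous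
    have e1 : ∫ x in closedBall (0 : E3) σ, g x * ((x k - a k) * pd j F (t • x + (1 - t) • a))
        = - (t⁻¹ * ∫ x in closedBall (0 : E3) σ, pd j G x * F (t • x + (1 - t) • a)) := by
      have := setIntegral_mul_pd (r := σ) j hGs (g := fun y => F (t • y + (1 - t) • a))
        (by fun_prop) hGt
      rw [← mul_neg, ← this, ← integral_const_mul]
      congr 1
      ext x
      rw [pd_comp_affine j hF, hG]
      field_simp
    rw [e1, abs_neg, abs_mul, abs_of_pos (inv_pos.2 ht0)]
    have hti : t⁻¹ ≤ 2 := by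
      rw [inv_le_comm₀ ht0 two_pos]; linarith
    have hti3 : (t ^ 3)⁻¹ ≤ 8 := by
      have : (t ^ 3)⁻¹ = t⁻¹ ^ 3 := by simp
      rw [this]
      calc t⁻¹ ^ 3 ≤ 2 ^ 3 := by gcongr
        _ = 8 := by norm_num
    have e2 : |∫ x in closedBall (0 : E3) σ, pd j G x * F (t • x + (1 - t) • a)|
        ≤ ∫ x in closedBall (0 : E3) σ, ((F2 / (2 * D)) * (pd j G x) ^ 2
          + (D / (2 * F2)) * (F (t • x + (1 - t) • a)) ^ 2) := by
      refine abs_integral_le_integral_abs.trans ?_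
      refine setIntegral_mono_closedBall (by fun_prop) (by fun_prop) fun x _ => ?_
      rw [abs_mul]
      have h1 := sq_nonneg (F2 * |pd j G x| - D * |F (t • x + (1 - t) • a)|)
      rw [← sq_abs (pd j G x), ← sq_abs (F _)]
      have : F2 / (2 * D) * |pd j G x| ^ 2 + D / (2 * F2) * |F (t • x + (1 - t) • a)| ^ 2
        - |pd j G x| * |F (t • x + (1 - t) • a)|
        = (F2 * |pd j G x| - D * |F (t • x + (1 - t) • a)|) ^ 2 / (2 * D * F2) := by
        field_simp
        ring
      have h2 : 0 ≤ (F2 * |pd j G x| - D * |F (t • x + (1 - t) • a)|) ^ 2 / (2 * D * F2) := by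
        positivity
      linarith
    have e3 : ∫ x in closedBall (0 : E3) σ, (F (t • x + (1 - t) • a)) ^ 2 ≤ 8 * F2 ^ 2 := by
      refine (setIntegral_comp_affine_le (H := fun y => F y ^ 2) (by fun_prop)
        (fun _ => sq_nonneg _) measurableSet_closedBall ht0 ((1 - t) • a)
        (fun x hx => affine_mem_closedBall hσ ht0.le ht1 hx ha)).trans ?_
      gcongr
    rw [integral_add (integrableOn_closedBall (by fun_prop) σ)
      (integrableOn_closedBall (by fun_prop) σ), integral_const_mul, integral_const_mul] at e2
    have e4 : F2 / (2 * D) * (∫ x in closedBall (0 : E3) σ, (pd j G x) ^ 2)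
        ≤ F2 / (2 * D) * D ^ 2 := by
      gcongr
      exact hDb a ha
    have e5 : D / (2 * F2) * (∫ x in closedBall (0 : E3) σ, (F (t • x + (1 - t) • a)) ^ 2)
        ≤ D / (2 * F2) * (8 * F2 ^ 2) := by
      gcongr
    have e6 : F2 / (2 * D) * D ^ 2 + D / (2 * F2) * (8 * F2 ^ 2) = 9 / 2 * (D * F2) := by
      field_simp
      ring
    calc t⁻¹ * |∫ x in closedBall (0 : E3) σ, pd j G x * F (t • x + (1 - t) • a)|
        ≤ 2 * (9 / 2 * (D * F2)) := by
          gcongr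
          linarith
      _ = 9 * (D * F2) := by ring
  unfold segmentPairing
  have hρc := hρ.continuous
  have hFd := (smoothFn_pd j hF).continuous
  have hgc := hg.continuous
  have hc : Continuous fun a : E3 => ∫ x in closedBall (0 : E3) σ,
      g x * ((x k - a k) * pd j F (t • x + (1 - t) • a)) := by
    refine continuous_setIntegral_closedBall ?_ σ
    simp only [Function.uncurry_def]
    fun_prop
  simp_rw [integral_const_mul]
  refine abs_integral_le_integral_abs.trans ?_
  calc _ ≤ ∫ a in closedBall (0 : E3) 1, ρ a * (9 * (D * F2)) := by
        refine setIntegral_mono_closedBall (by fun_prop) (by fun_prop) fun a ha => ?_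
        rw [abs_mul, abs_of_nonneg (hρ0 a)]
        exact mul_le_mul_of_nonneg_left (inner a ha) (hρ0 a)
    _ = 9 * (D * F2) := by rw [integral_mul_const, hρ1, one_mul]

end SegmentPairing

section SegmentPairingBounds

variable {ρ g F : E3 → ℝ} {σ : ℝ} {j k : Fin 3} {t : ℝ}

/-- The volume of the closed ball of radius two. -/
def volBallTwo : ℝ := volume.real (closedBall (0 : E3) 2)

theorem volume_closedBall_le_volBallTwo {r : ℝ} (hr : r ≤ 2) :
    volume.real (closedBall (0 : E3) r) ≤ volBallTwo :=
  measureReal_mono (closedBall_subset_closedBall hr) measure_closedBall_lt_top.ne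

theorem volBallTwo_nonneg : 0 ≤ volBallTwo := measureReal_nonneg

theorem inv_pow_three_le_eight {s : ℝ} (hs : 1 / 2 ≤ s) : (s ^ 3)⁻¹ ≤ 8 := by
  have h0 : 0 < s := by linarith
  have hti : s⁻¹ ≤ 2 := by
    rw [inv_le_comm₀ h0 two_pos]; linarith
  calc (s ^ 3)⁻¹ = s⁻¹ ^ 3 := by simp
    _ ≤ 2 ^ 3 := by gcongr
    _ = 8 := by norm_num

theorem affine_mem_closedBall' (hσ : 1 ≤ σ) (ht0 : 0 ≤ t) (ht1 : t ≤ 1) {x a : E3}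
    (hx : x ∈ closedBall (0 : E3) σ) (ha : a ∈ closedBall (0 : E3) 1) :
    (1 - t) • a + t • x ∈ closedBall (0 : E3) σ := by
  rw [add_comm]
  exact affine_mem_closedBall hσ ht0 ht1 hx ha

theorem setIntegral_slice_le {H : E3 → ℝ} (hH : Continuous H) (hH0 : ∀ x, 0 ≤ H x)
    (hσ : 1 ≤ σ) (ht0 : 0 ≤ t) (ht1 : t < 1) {x : E3} (hx : x ∈ closedBall (0 : E3) σ) :
    ∫ a in closedBall (0 : E3) 1, H (t • x + (1 - t) • a)
      ≤ ((1 - t) ^ 3)⁻¹ * ∫ y in closedBall (0 : E3) σ, H y := by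
  have h := setIntegral_comp_affine_le hH hH0 (S := closedBall (0 : E3) 1) (s := σ)
    measurableSet_closedBall (t := 1 - t) (by linarith) (t • x)
    (fun a ha => affine_mem_closedBall' hσ ht0 ht1.le hx ha)
  simpa only [add_comm] using h

theorem setIntegral_setIntegral_affine_le {H : E3 → ℝ} (hH : Continuous H)
    (hH0 : ∀ x, 0 ≤ H x) (hσ : 1 ≤ σ) (hσ2 : σ ≤ 2) (ht0 : 0 ≤ t) (ht1 : t < 1) :
    ∫ x in closedBall (0 : E3) σ, ∫ a in closedBall (0 : E3) 1, H (t • x + (1 - t) • a)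
      ≤ 8 * volBallTwo * ∫ y in closedBall (0 : E3) σ, H y := by
  have hI : 0 ≤ ∫ y in closedBall (0 : E3) σ, H y := integral_nonneg hH0
  have hc : Continuous fun p : E3 × E3 => H (t • p.1 + (1 - t) • p.2) := by fun_prop
  rcases le_total t (1 / 2) with ht | ht
  · calc _ ≤ ∫ x in closedBall (0 : E3) σ, 8 * ∫ y in closedBall (0 : E3) σ, H y := by
          refine setIntegral_mono_closedBall ?_ continuous_const fun x hx => ?_
          · exact continuous_setIntegral_closedBall hc 1
          · refine (setIntegral_slice_le hH hH0 hσ ht0 ht1 hx).trans ?_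
            gcongr
            exact inv_pow_three_le_eight (by linarith)
      _ = volume.real (closedBall (0 : E3) σ) * (8 * ∫ y in closedBall (0 : E3) σ, H y) := by
          simp [integral_const]
      _ ≤ volBallTwo * (8 * ∫ y in closedBall (0 : E3) σ, H y) := by
          gcongr
          exact volume_closedBall_le_volBallTwo hσ2
      _ = _ := by ring
  · rw [setIntegral_swap_closedBall (f := fun x a => H (t • x + (1 - t) • a)) hc]
    calc _ ≤ ∫ a in closedBall (0 : E3) 1, 8 * ∫ y in closedBall (0 : E3) σ, H y := by
          refine setIntegral_mono_closedBall ?_ continuous_const fun a ha => ?_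
          · exact continuous_setIntegral_closedBall
              (f := fun a x => H (t • x + (1 - t) • a)) (by fun_prop) σ
          · refine (setIntegral_comp_affine_le hH hH0 measurableSet_closedBall
              (by linarith : 0 < t) ((1 - t) • a)
              (fun x hx => affine_mem_closedBall hσ ht0 ht1.le hx ha)).trans ?_
            gcongr
            exact inv_pow_three_le_eight ht
      _ = volume.real (closedBall (0 : E3) 1) * (8 * ∫ y in closedBall (0 : E3) σ, H y) := by
          simp [integral_const]
      _ ≤ volBallTwo * (8 * ∫ y in closedBall (0 : E3) σ, H y) := by
          gcongr
          exact volume_closedBall_le_volBallTwo (by norm_num)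
      _ = _ := by ring

theorem abs_segmentPairing_le {L : ℝ} (hL : 0 ≤ L) (hρ : SmoothFn ρ)
    (hρs : tsupport ρ ⊆ closedBall (0 : E3) 1)
    (hρL : ∀ x ∈ closedBall (0 : E3) 2, ∀ a j k, |pd j (fun y => ρ y * (x k - y k)) a| ≤ L)
    (hσ : 1 ≤ σ) (hσ2 : σ ≤ 2) (hg : SmoothFn g)
    (hF : SmoothFn F) {G F1 lam : ℝ} (hlam : 0 < lam)
    (hGb : ∫ x in closedBall (0 : E3) σ, (g x) ^ 2 ≤ G ^ 2)
    (hFb : ∫ x in closedBall (0 : E3) σ, |F x| ≤ F1)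
    (ht0 : 0 ≤ t) (ht1 : t < 1) :
    |segmentPairing ρ g F σ j k t| ≤ (1 - t)⁻¹ * (L * (lam / 2 * (G ^ 2 * (((1 - t) ^ 3)⁻¹ * F1))
      + lam⁻¹ / 2 * (8 * volBallTwo * F1))) := by
  have hs : 0 < 1 - t := by linarith
  have hρc := hρ.continuous
  have hFc := hF.continuous
  have hFd := (smoothFn_pd j hF).continuous
  have hgc := hg.continuous
  have hA : Continuous fun p : E3 × E3 => |F (t • p.1 + (1 - t) • p.2)| := by fun_prop
  have inner : ∀ x ∈ closedBall (0 : E3) σ,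
      |∫ a in closedBall (0 : E3) 1,
        ρ a * (g x * ((x k - a k) * pd j F (t • x + (1 - t) • a)))|
      ≤ |g x| * ((1 - t)⁻¹ * (L * ∫ a in closedBall (0 : E3) 1, |F (t • x + (1 - t) • a)|)) := by
    intro x hx
    set R : E3 → ℝ := fun y => ρ y * (x k - y k) with hR
    have hRs : SmoothFn R := by fun_prop
    have hRt : tsupport R ⊆ closedBall (0 : E3) 1 :=
      (tsupport_mul_subset_left (f := ρ) (g := fun y => x k - y k)).trans hρs
    have hRc := (smoothFn_pd j hRs).continuous
    have e1 : ∫ a in closedBall (0 : E3) 1,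
        ρ a * (g x * ((x k - a k) * pd j F (t • x + (1 - t) • a)))
        = - (g x * ((1 - t)⁻¹ *
          ∫ a in closedBall (0 : E3) 1, pd j R a * F ((1 - t) • a + t • x))) := by
      have := setIntegral_mul_pd (r := 1) j hRs (g := fun y => F ((1 - t) • y + t • x))
        (by fun_prop) hRt
      rw [← mul_neg, ← mul_neg, ← this, ← integral_const_mul, ← integral_const_mul]
      congr 1
      ext a
      rw [pd_comp_affine j hF, hR, add_comm (t • x)]
      field_simp
    rw [e1, abs_neg, abs_mul, abs_mul, abs_of_pos (inv_pos.2 hs)]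
    gcongr
    refine abs_integral_le_integral_abs.trans ?_
    rw [← integral_const_mul]
    refine setIntegral_mono_closedBall (by fun_prop) (by fun_prop) fun a _ => ?_
    rw [abs_mul, add_comm (t • x)]
    gcongr
    exact hρL x (closedBall_subset_closedBall hσ2 hx) a j k
  have hcA : Continuous fun x : E3 => ∫ a in closedBall (0 : E3) 1, |F (t • x + (1 - t) • a)| :=
    continuous_setIntegral_closedBall hA 1
  have hc1 : Continuous fun x : E3 => ∫ a in closedBall (0 : E3) 1,
        ρ a * (g x * ((x k - a k) * pd j F (t • x + (1 - t) • a))) := by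
    refine continuous_setIntegral_closedBall ?_ 1
    simp only [Function.uncurry_def]
    fun_prop
  have hF1 : 0 ≤ F1 := (integral_nonneg fun _ => abs_nonneg _).trans hFb
  have e2 : |segmentPairing ρ g F σ j k t| ≤ ∫ x in closedBall (0 : E3) σ,
      ((1 - t)⁻¹ * L * (lam / 2 * (((1 - t) ^ 3)⁻¹ * F1)) * (g x) ^ 2
        + (1 - t)⁻¹ * L * (lam⁻¹ / 2) *
          ∫ a in closedBall (0 : E3) 1, |F (t • x + (1 - t) • a)|) := by
    unfold segmentPairing
    rw [setIntegral_swap_closedBall (f := fun a x =>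
      ρ a * (g x * ((x k - a k) * pd j F (t • x + (1 - t) • a)))) (by
        simp only [Function.uncurry_def]
        fun_prop)]
    refine abs_integral_le_integral_abs.trans ?_
    refine setIntegral_mono_closedBall (by fun_prop) (by fun_prop) fun x hx => ?_
    refine (inner x hx).trans ?_
    set I := ∫ a in closedBall (0 : E3) 1, |F (t • x + (1 - t) • a)| with hI
    have hI0 : 0 ≤ I := integral_nonneg fun _ => abs_nonneg _
    have hI1 : I ≤ ((1 - t) ^ 3)⁻¹ * F1 :=
      (setIntegral_slice_le (H := fun y => |F y|) (by fun_prop) (fun _ => abs_nonneg _)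
        hσ ht0 ht1 hx).trans (by gcongr)
    have hy : |g x| ≤ lam / 2 * (g x) ^ 2 + lam⁻¹ / 2 := by
      rw [← sq_abs]
      have h1 := sq_nonneg (lam * |g x| - 1)
      have : lam / 2 * |g x| ^ 2 + lam⁻¹ / 2 - |g x| = (lam * |g x| - 1) ^ 2 / (2 * lam) := by
        field_simp
        ring
      have h2 : 0 ≤ (lam * |g x| - 1) ^ 2 / (2 * lam) := by positivity
      linarith
    calc |g x| * ((1 - t)⁻¹ * (L * I))
        ≤ (lam / 2 * (g x) ^ 2 + lam⁻¹ / 2) * ((1 - t)⁻¹ * (L * I)) := by gcongr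
      _ = (1 - t)⁻¹ * L * (lam / 2 * I) * (g x) ^ 2 + (1 - t)⁻¹ * L * (lam⁻¹ / 2) * I := by ring
      _ ≤ _ := by gcongr
  refine e2.trans ?_
  rw [integral_add (integrableOn_closedBall (by fun_prop) σ)
      (integrableOn_closedBall (by fun_prop) σ), integral_const_mul, integral_const_mul]
  have e3 := setIntegral_setIntegral_affine_le (H := fun y => |F y|) (by fun_prop)
    (fun _ => abs_nonneg _) hσ hσ2 ht0 ht1
  have hV := volBallTwo_nonneg
  calc _ ≤ (1 - t)⁻¹ * L * (lam / 2 * (((1 - t) ^ 3)⁻¹ * F1)) * G ^ 2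
        + (1 - t)⁻¹ * L * (lam⁻¹ / 2) * (8 * volBallTwo * F1) := by
        gcongr
        exact e3.trans (by gcongr)
    _ = _ := by ring

theorem abs_segmentPairing_le_rpow {L : ℝ} (hL : 0 ≤ L) (hρ : SmoothFn ρ)
    (hρs : tsupport ρ ⊆ closedBall (0 : E3) 1)
    (hρL : ∀ x ∈ closedBall (0 : E3) 2, ∀ a j k, |pd j (fun y => ρ y * (x k - y k)) a| ≤ L)
    (hσ : 1 ≤ σ) (hσ2 : σ ≤ 2) (hg : SmoothFn g)
    (hF : SmoothFn F) {G F1 : ℝ} (hG : 0 < G)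
    (hGb : ∫ x in closedBall (0 : E3) σ, (g x) ^ 2 ≤ G ^ 2)
    (hFb : ∫ x in closedBall (0 : E3) σ, |F x| ≤ F1)
    (ht0 : 0 ≤ t) (ht1 : t < 1) :
    |segmentPairing ρ g F σ j k t| ≤
      L * (1 / 2 + 4 * volBallTwo) * (G * F1) * (1 - t) ^ (-(5 / 2) : ℝ) := by
  have hs : 0 < 1 - t := by linarith
  have h := abs_segmentPairing_le (j := j) (k := k) hL hρ hρs hρL hσ hσ2 hg hF
    (lam := (1 - t) ^ (3 / 2 : ℝ) / G) (by positivity) hGb hFb ht0 ht1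
  refine h.trans (le_of_eq ?_)
  set r := (1 - t) ^ (1 / 2 : ℝ) with hr
  have hr0 : 0 < r := by positivity
  have e2 : 1 - t = r ^ 2 := by
    rw [hr, ← rpow_natCast, ← rpow_mul hs.le]; norm_num
  have e3 : (1 - t) ^ (3 / 2 : ℝ) = r ^ 3 := by
    rw [hr, ← rpow_natCast, ← rpow_mul hs.le]; norm_num
  have e5 : (1 - t) ^ (-(5 / 2) : ℝ) = (r ^ 5)⁻¹ := by
    rw [rpow_neg hs.le, hr, ← rpow_natCast, ← rpow_mul hs.le]; norm_num
  rw [e5, e3, e2]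
  field_simp
  ring

theorem integral_one_sub_rpow_le {h : ℝ} (hh : 0 < h) (hh1 : h ≤ 1) :
    ∫ t in (0 : ℝ)..(1 - h), (1 - t) ^ (-(5 / 2) : ℝ) ≤ h ^ (-(3 / 2) : ℝ) := by
  rw [intervalIntegral.integral_comp_sub_left (fun t => t ^ (-(5 / 2) : ℝ)) 1]
  have : (0 : ℝ) ∉ Set.uIcc (1 - (1 - h)) (1 - 0) := by
    rw [Set.uIcc_of_le (by linarith)]
    simpa using hh
  rw [integral_rpow (Or.inr ⟨by norm_num, this⟩)]
  have h0 : 0 ≤ h ^ (-(3 / 2) : ℝ) := by positivity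
  norm_num at *
  linarith

/-- Splitting the segment integral at `1 - q²`. -/
theorem abs_integral_segmentPairing_le {L : ℝ} (hL : 0 ≤ L) (hρ : SmoothFn ρ)
    (hρ0 : ∀ a, 0 ≤ ρ a) (hρ1 : ∫ a in closedBall (0 : E3) 1, ρ a = 1)
    (hρs : tsupport ρ ⊆ closedBall (0 : E3) 1)
    (hρL : ∀ x ∈ closedBall (0 : E3) 2, ∀ a j k, |pd j (fun y => ρ y * (x k - y k)) a| ≤ L)
    (hσ : 1 ≤ σ) (hσ2 : σ ≤ 2) (hg : SmoothFn g) (hgs : tsupport g ⊆ closedBall (0 : E3) σ)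
    (hF : SmoothFn F) {G F1 D F2 q : ℝ} (hG : 0 < G) (hD : 0 < D) (hF2 : 0 < F2)
    (hGb : ∫ x in closedBall (0 : E3) σ, (g x) ^ 2 ≤ G ^ 2)
    (hFb : ∫ x in closedBall (0 : E3) σ, |F x| ≤ F1)
    (hDb : ∀ a ∈ closedBall (0 : E3) 1,
      ∫ x in closedBall (0 : E3) σ, (pd j (fun y => g y * (y k - a k)) x) ^ 2 ≤ D ^ 2)
    (hF2b : ∫ x in closedBall (0 : E3) σ, (F x) ^ 2 ≤ F2 ^ 2)
    (hq : 0 < q) (hq2 : q ^ 2 ≤ 1 / 2) :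
    |∫ t in (0 : ℝ)..1, segmentPairing ρ g F σ j k t| ≤
      (9 + L * (1 / 2 + 4 * volBallTwo)) * (G * F1 / q ^ 3 + q ^ 2 * (D * F2)) := by
  have hq20 : 0 < q ^ 2 := by positivity
  have hc := continuous_segmentPairing (j := j) (k := k) (σ := σ) hρ hg hF
  have hV := volBallTwo_nonneg
  have hF1 : 0 ≤ F1 := (integral_nonneg fun _ => abs_nonneg _).trans hFb
  rw [← intervalIntegral.integral_add_adjacent_intervals (b := 1 - q ^ 2)
    (hc.intervalIntegrable _ _) (hc.intervalIntegrable _ _)]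
  refine (abs_add_le _ _).trans ?_
  have h1 : |∫ t in (0 : ℝ)..(1 - q ^ 2), segmentPairing ρ g F σ j k t| ≤
      L * (1 / 2 + 4 * volBallTwo) * (G * F1 / q ^ 3) := by
    have hint : IntervalIntegrable (fun t : ℝ => L * (1 / 2 + 4 * volBallTwo) * (G * F1) *
        (1 - t) ^ (-(5 / 2) : ℝ)) volume 0 (1 - q ^ 2) := by
      apply ContinuousOn.intervalIntegrable
      refine continuousOn_const.mul ?_
      refine ContinuousOn.rpow_const (by fun_prop) fun t ht => Or.inl ?_
      rw [Set.uIcc_of_le (by linarith)] at ht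
      have := ht.2
      linarith
    have := intervalIntegral.norm_integral_le_of_norm_le (μ := volume)
      (f := segmentPairing ρ g F σ j k)
      (by linarith : (0 : ℝ) ≤ 1 - q ^ 2) (.of_forall fun t ht => by
        rw [Real.norm_eq_abs]
        exact abs_segmentPairing_le_rpow (j := j) (k := k) hL hρ hρs hρL hσ hσ2 hg hF hG hGb hFb
          ht.1.le (by linarith [ht.2])) hint
    rw [Real.norm_eq_abs, intervalIntegral.integral_const_mul] at this
    refine this.trans ?_
    have h2 := integral_one_sub_rpow_le hq20 (by linarith)
    have h3 : (q ^ 2) ^ (-(3 / 2) : ℝ) = (q ^ 3)⁻¹ := by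
      rw [rpow_neg hq20.le, ← rpow_natCast, ← rpow_mul hq.le, ← rpow_natCast]
      norm_num
    rw [h3] at h2
    calc _ ≤ L * (1 / 2 + 4 * volBallTwo) * (G * F1) * (q ^ 3)⁻¹ := by gcongr
      _ = _ := by ring
  have h2 : |∫ t in (1 - q ^ 2)..1, segmentPairing ρ g F σ j k t| ≤ 9 * (q ^ 2 * (D * F2)) := by
    have := intervalIntegral.norm_integral_le_of_norm_le_const
      (f := segmentPairing ρ g F σ j k) (a := 1 - q ^ 2) (b := 1) (C := 9 * (D * F2))
      (fun t ht => by
        rw [Set.uIoc_of_le (by linarith)] at ht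
        rw [Real.norm_eq_abs]
        exact abs_segmentPairing_le_near_one hρ hρ0 hρ1 hσ hg hgs hF hD hF2 hDb hF2b
          (by linarith [ht.1]) ht.2)
    rw [Real.norm_eq_abs] at this
    refine this.trans (le_of_eq ?_)
    rw [show (1 : ℝ) - (1 - q ^ 2) = q ^ 2 by ring, abs_of_pos hq20]
    ring
  have hx : 0 ≤ G * F1 / q ^ 3 := by positivity
  have hy : 0 ≤ q ^ 2 * (D * F2) := by positivity
  have hLV : 0 ≤ L * (1 / 2 + 4 * volBallTwo) := by positivity
  nlinarith [mul_nonneg hLV hy]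

end SegmentPairingBounds

theorem exists_averaging_weight : ∃ (ρ : E3 → ℝ) (L : ℝ), 0 ≤ L ∧ SmoothFn ρ ∧ (∀ a, 0 ≤ ρ a) ∧
    (∫ a in closedBall (0 : E3) 1, ρ a = 1) ∧ tsupport ρ ⊆ closedBall (0 : E3) 1 ∧
    ∀ x ∈ closedBall (0 : E3) 2, ∀ a j k, |pd j (fun y => ρ y * (x k - y k)) a| ≤ L := by
  let φ : ContDiffBump (0 : E3) := ⟨1 / 2, 1, by norm_num, by norm_num⟩
  have hs : SmoothFn (φ.normed volume) := φ.contDiff_normed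
  have ht : tsupport (φ.normed volume) ⊆ closedBall (0 : E3) 1 := by
    rw [φ.tsupport_normed_eq]
  have hbd : ∀ f : E3 → ℝ, Continuous f → ∃ c : ℝ, 0 ≤ c ∧
      ∀ a ∈ closedBall (0 : E3) 1, |f a| ≤ c := by
    intro f hf
    obtain ⟨c, hc⟩ := (isCompact_closedBall (0 : E3) 1).exists_bound_of_continuousOn
      hf.continuousOn
    exact ⟨c, (norm_nonneg _).trans (hc 0 (by simp)), hc⟩
  obtain ⟨c0, hc00, hc0⟩ := hbd _ hs.continuous
  choose c1 hc10 hc1 using fun i : Fin 3 => hbd _ (smoothFn_pd i hs).continuous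
  refine ⟨φ.normed volume, 3 * (∑ i, c1 i) + c0, ?_, hs, φ.nonneg_normed, ?_, ht, ?_⟩
  · have := Finset.sum_nonneg fun i (_ : i ∈ Finset.univ) => hc10 i
    positivity
  · rw [setIntegral_eq_integral_of_forall_compl_eq_zero (fun x hx =>
      eq_zero_of_tsupport_subset ht hx)]
    exact φ.integral_normed
  · intro x hx a j k
    have hS : 0 ≤ ∑ i, c1 i := Finset.sum_nonneg fun i _ => hc10 i
    by_cases ha : a ∈ closedBall (0 : E3) 1
    · rw [pd_mul j hs (by fun_prop), pd_sub j contDiff_const (smoothFn_coord k), pd_const, pd_coord]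
      refine (abs_add_le _ _).trans ?_
      rw [abs_mul, abs_mul]
      have h1 : |x k - a k| ≤ 3 := by
        have hx1 := (abs_coord_le_norm x k).trans (mem_closedBall_zero_iff.1 hx)
        have ha1 := (abs_coord_le_norm a k).trans (mem_closedBall_zero_iff.1 ha)
        have := abs_sub (x k) (a k)
        linarith
      have h2 : |(0 : ℝ) - if j = k then 1 else 0| ≤ 1 := by
        split_ifs <;> simp
      have h3 : |pd j (φ.normed volume) a| ≤ ∑ i, c1 i :=
        (hc1 j a ha).trans (Finset.single_le_sum (fun i _ => hc10 i) (Finset.mem_univ j))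
      calc _ ≤ (∑ i, c1 i) * 3 + c0 * 1 := by
            gcongr
            exact hc0 a ha
        _ = _ := by ring
    · have : tsupport (fun y => φ.normed volume y * (x k - y k)) ⊆ closedBall (0 : E3) 1 :=
        (tsupport_mul_subset_left (f := φ.normed volume) (g := fun y => x k - y k)).trans ht
      rw [pd_eq_zero_of_tsupport_subset this ha]
      simp
      positivity

theorem intervalIntegral_setIntegral_swap {f : ℝ → E3 → ℝ} (hf : Continuous f.uncurry) (r : ℝ) :
    ∫ t in (0 : ℝ)..1, ∫ x in closedBall (0 : E3) r, f t x
      = ∫ x in closedBall (0 : E3) r, ∫ t in (0 : ℝ)..1, f t x := by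
  simp_rw [intervalIntegral.integral_of_le zero_le_one]
  refine integral_integral_swap ?_
  rw [Measure.prod_restrict]
  exact (hf.continuousOn.integrableOn_compact
    ((isCompact_Icc (a := (0 : ℝ)) (b := 1)).prod (isCompact_closedBall (0 : E3) r))).mono_set
    (Set.prod_mono Set.Ioc_subset_Icc_self subset_rfl)

theorem sub_eq_intervalIntegral_pd {P : E3 → ℝ} (hP : SmoothFn P) (x a : E3) :
    P x - P a = ∫ t in (0 : ℝ)..1, ∑ k, (x k - a k) * pd k P (t • x + (1 - t) • a) := by
  have hd : ∀ t : ℝ, HasDerivAt (fun s : ℝ => P (s • x + (1 - s) • a))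
      (∑ k, (x k - a k) * pd k P (t • x + (1 - t) • a)) t := by
    intro t
    have h1 : HasDerivAt (fun s : ℝ => s • x + (1 - s) • a) (x - a) t := by
      have h0 : HasDerivAt (fun s : ℝ => a + s • (x - a)) ((1 : ℝ) • (x - a)) t :=
        ((hasDerivAt_id t).smul_const (x - a)).const_add a
      rw [one_smul] at h0
      refine h0.congr_of_eventuallyEq (.of_forall fun s => ?_)
      module
    have h2 := (smoothFn_differentiableAt hP (t • x + (1 - t) • a)).hasFDerivAt.comp_hasDerivAt t h1
    rw [fderiv_apply_eq_sum_pd] at h2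
    exact h2
  have hc : Continuous fun t : ℝ => ∑ k, (x k - a k) * pd k P (t • x + (1 - t) • a) := by
    have := fun k => (smoothFn_pd k hP).continuous
    fun_prop
  rw [intervalIntegral.integral_eq_sub_of_hasDerivAt (fun t _ => hd t)
    (hc.intervalIntegrable _ _)]
  simp

theorem setIntegral_mul_eq_segment {ρ g P : E3 → ℝ} {σ : ℝ} (hρ : SmoothFn ρ)
    (hρ1 : ∫ a in closedBall (0 : E3) 1, ρ a = 1) (hg : SmoothFn g)
    (hg0 : ∫ x in closedBall (0 : E3) σ, g x = 0) (hP : SmoothFn P) :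
    ∫ x in closedBall (0 : E3) σ, P x * g x = ∫ t in (0 : ℝ)..1,
      ∫ a in closedBall (0 : E3) 1, ∫ x in closedBall (0 : E3) σ,
        ρ a * (g x * ∑ k, (x k - a k) * pd k P (t • x + (1 - t) • a)) := by
  have hPd := fun k => (smoothFn_pd k hP).continuous
  have hρc := hρ.continuous
  have hgc := hg.continuous
  have hPc := hP.continuous
  rw [intervalIntegral_setIntegral_swap (f := fun t a => ∫ x in closedBall (0 : E3) σ,
    ρ a * (g x * ∑ k, (x k - a k) * pd k P (t • x + (1 - t) • a)))]
  swap
  · refine continuous_setIntegral_closedBall (X := ℝ × E3) (f := fun p x =>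
      ρ p.2 * (g x * ∑ k, (x k - p.2 k) * pd k P (p.1 • x + (1 - p.1) • p.2))) ?_ σ
    simp only [Function.uncurry_def]
    fun_prop
  have h : ∀ a : E3, ∫ t in (0 : ℝ)..1, ∫ x in closedBall (0 : E3) σ,
      ρ a * (g x * ∑ k, (x k - a k) * pd k P (t • x + (1 - t) • a))
      = ρ a * ∫ x in closedBall (0 : E3) σ, P x * g x := by
    intro a
    rw [intervalIntegral_setIntegral_swap (f := fun t x =>
      ρ a * (g x * ∑ k, (x k - a k) * pd k P (t • x + (1 - t) • a)))
      (by simp only [Function.uncurry_def]; fun_prop)]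
    simp_rw [intervalIntegral.integral_const_mul, ← sub_eq_intervalIntegral_pd hP]
    rw [integral_const_mul]
    congr 1
    have : ∀ x, g x * (P x - P a) = P x * g x - P a * g x := fun x => by ring
    simp_rw [this]
    rw [integral_sub (integrableOn_closedBall (by fun_prop) σ)
      (integrableOn_closedBall (by fun_prop) σ), integral_const_mul, hg0]
    simp
  simp_rw [h]
  rw [integral_mul_const, hρ1, one_mul]

theorem setIntegral_mul_eq_sum_segmentPairing {ρ g P : E3 → ℝ} {σ : ℝ} (hρ : SmoothFn ρ)
    (hρ1 : ∫ a in closedBall (0 : E3) 1, ρ a = 1) (hg : SmoothFn g)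
    (hg0 : ∫ x in closedBall (0 : E3) σ, g x = 0) (hP : SmoothFn P)
    {A B : Fin 3 → Fin 3 → E3 → ℝ} (hA : ∀ j k, SmoothFn (A j k)) (hB : ∀ j k, SmoothFn (B j k))
    (hPAB : ∀ k x, pd k P x = ∑ j, (pd j (A j k) x + pd j (B j k) x)) :
    ∫ x in closedBall (0 : E3) σ, P x * g x = ∑ k, ∑ j,
      ((∫ t in (0 : ℝ)..1, segmentPairing ρ g (A j k) σ j k t)
        + ∫ t in (0 : ℝ)..1, segmentPairing ρ g (B j k) σ j k t) := by
  have hAd := fun j k => (smoothFn_pd j (hA j k)).continuous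
  have hBd := fun j k => (smoothFn_pd j (hB j k)).continuous
  have hρc := hρ.continuous
  have hgc := hg.continuous
  rw [setIntegral_mul_eq_segment hρ hρ1 hg hg0 hP]
  have hsA := fun j k => continuous_segmentPairing (σ := σ) (j := j) (k := k) hρ hg (hA j k)
  have hsB := fun j k => continuous_segmentPairing (σ := σ) (j := j) (k := k) hρ hg (hB j k)
  have key : ∀ t : ℝ, (∫ a in closedBall (0 : E3) 1, ∫ x in closedBall (0 : E3) σ,
        ρ a * (g x * ∑ k, (x k - a k) * pd k P (t • x + (1 - t) • a)))
      = ∑ k, ∑ j, (segmentPairing ρ g (A j k) σ j k t + segmentPairing ρ g (B j k) σ j k t) := by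
    intro t
    have hT : ∀ (f : E3 → ℝ) (k : Fin 3), Continuous f → Continuous fun a : E3 =>
        ∫ x in closedBall (0 : E3) σ, ρ a * (g x * ((x k - a k) * f (t • x + (1 - t) • a))) := by
      intro f k hf
      refine continuous_setIntegral_closedBall ?_ σ
      simp only [Function.uncurry_def]
      fun_prop
    have e : ∀ a x : E3, ρ a * (g x * ∑ k, (x k - a k) * pd k P (t • x + (1 - t) • a))
        = ∑ k, ∑ j, (ρ a * (g x * ((x k - a k) * pd j (A j k) (t • x + (1 - t) • a)))
          + ρ a * (g x * ((x k - a k) * pd j (B j k) (t • x + (1 - t) • a)))) := by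
      intro a x
      simp_rw [hPAB, Finset.mul_sum, mul_add]
    simp_rw [e]
    unfold segmentPairing
    have e2 : ∀ a : E3, (∫ x in closedBall (0 : E3) σ,
        ∑ k, ∑ j, (ρ a * (g x * ((x k - a k) * pd j (A j k) (t • x + (1 - t) • a)))
          + ρ a * (g x * ((x k - a k) * pd j (B j k) (t • x + (1 - t) • a)))))
        = ∑ k, ∑ j, ((∫ x in closedBall (0 : E3) σ,
            ρ a * (g x * ((x k - a k) * pd j (A j k) (t • x + (1 - t) • a))))
          + ∫ x in closedBall (0 : E3) σ,
            ρ a * (g x * ((x k - a k) * pd j (B j k) (t • x + (1 - t) • a)))) := by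
      intro a
      rw [integral_finsetSum _ fun k _ => integrableOn_closedBall (by fun_prop) σ]
      refine Finset.sum_congr rfl fun k _ => ?_
      rw [integral_finsetSum _ fun j _ => integrableOn_closedBall (by fun_prop) σ]
      refine Finset.sum_congr rfl fun j _ => ?_
      rw [integral_add (integrableOn_closedBall (by fun_prop) σ)
        (integrableOn_closedBall (by fun_prop) σ)]
    simp_rw [e2]
    have hTA := fun j k => hT _ k (hAd j k)
    have hTB := fun j k => hT _ k (hBd j k)
    rw [integral_finsetSum _ fun k _ => integrableOn_closedBall (by fun_prop) 1]
    refine Finset.sum_congr rfl fun k _ => ?_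
    rw [integral_finsetSum _ fun j _ => integrableOn_closedBall (by fun_prop) 1]
    refine Finset.sum_congr rfl fun j _ => ?_
    rw [integral_add (integrableOn_closedBall (hTA j k) 1) (integrableOn_closedBall (hTB j k) 1)]
  simp_rw [key]
  rw [intervalIntegral.integral_finsetSum fun k _ =>
    Continuous.intervalIntegrable (by fun_prop) _ _]
  refine Finset.sum_congr rfl fun k _ => ?_
  rw [intervalIntegral.integral_finsetSum fun j _ =>
    Continuous.intervalIntegrable (by fun_prop) _ _]
  refine Finset.sum_congr rfl fun j _ => ?_
  rw [intervalIntegral.integral_add ((hsA j k).intervalIntegrable _ _)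
    ((hsB j k).intervalIntegrable _ _)]

theorem hasCompactSupport_deriv_smoothTransition :
    HasCompactSupport (deriv Real.smoothTransition) := by
  refine HasCompactSupport.intro (isCompact_Icc (a := (0 : ℝ)) (b := 1)) fun t ht => ?_
  rw [Set.mem_Icc, not_and_or, not_le, not_le] at ht
  rcases ht with ht | ht
  · have : Real.smoothTransition =ᶠ[𝓝 t] fun _ => (0 : ℝ) := by
      filter_upwards [Iio_mem_nhds ht] with y hy
      exact Real.smoothTransition.zero_of_nonpos (le_of_lt hy)
    rw [this.deriv_eq, deriv_const]
  · have : Real.smoothTransition =ᶠ[𝓝 t] fun _ => (1 : ℝ) := by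
      filter_upwards [Ioi_mem_nhds ht] with y hy
      exact Real.smoothTransition.one_of_one_le (le_of_lt hy)
    rw [this.deriv_eq, deriv_const]

theorem pd_comp_real (i : Fin 3) {χ : ℝ → ℝ} {f : E3 → ℝ} (hχ : Differentiable ℝ χ)
    (hf : SmoothFn f) (x : E3) :
    pd i (fun y => χ (f y)) x = deriv χ (f x) * pd i f x := by
  have h := (hχ (f x)).hasDerivAt.comp_hasFDerivAt x (smoothFn_differentiableAt hf x).hasFDerivAt
  have h2 : fderiv ℝ (fun y => χ (f y)) x = deriv χ (f x) • fderiv ℝ f x := h.fderiv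
  simp [pd, h2]

theorem exists_cutoff : ∃ C : ℝ, 1 ≤ C ∧ ∀ r s : ℝ, 1 ≤ r → r < s → s ≤ 2 →
    ∃ φ : E3 → ℝ, SmoothFn φ ∧ (∀ x, 0 ≤ φ x) ∧ (∀ x, φ x ≤ 1) ∧
      (∀ x ∈ closedBall (0 : E3) r, φ x = 1) ∧ tsupport φ ⊆ closedBall (0 : E3) s ∧
      (∀ i x, |pd i φ x| ≤ C / (s - r)) ∧
      ∀ i j x, |pd i (fun y => pd j φ y) x| ≤ C / (s - r) ^ 2 := by
  have hχs : ContDiff ℝ ((⊤ : ℕ∞) : WithTop ℕ∞) Real.smoothTransition :=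
    Real.smoothTransition.contDiff
  have hχ's : ContDiff ℝ ((⊤ : ℕ∞) : WithTop ℕ∞) (deriv Real.smoothTransition) :=
    (contDiff_infty_iff_deriv.1 hχs).2
  have hχ''s : ContDiff ℝ ((⊤ : ℕ∞) : WithTop ℕ∞) (deriv (deriv Real.smoothTransition)) :=
    (contDiff_infty_iff_deriv.1 hχ's).2
  obtain ⟨M, hM⟩ := hasCompactSupport_deriv_smoothTransition.exists_bound_of_continuous
    hχ's.continuous
  obtain ⟨M', hM'⟩ := hasCompactSupport_deriv_smoothTransition.deriv.exists_bound_of_continuous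
    hχ''s.continuous
  simp only [Real.norm_eq_abs] at hM hM'
  have hM0 : 0 ≤ M := (abs_nonneg _).trans (hM 0)
  have hM'0 : 0 ≤ M' := (abs_nonneg _).trans (hM' 0)
  refine ⟨18 * (M + M' + 1), by linarith, fun r s hr hrs hs => ?_⟩
  set d := s - r with hd
  have hd0 : 0 < d := by linarith
  have hd1 : d ≤ 1 := by linarith
  set m := (s ^ 2 - r ^ 2)⁻¹ with hm
  have hsr : 0 < s ^ 2 - r ^ 2 := by nlinarith
  have hm0 : 0 < m := inv_pos.2 hsr
  have hmd : m ≤ 1 / d := by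
    rw [hm, ← one_div]
    exact one_div_le_one_div_of_le hd0 (by nlinarith)
  set ψ : E3 → ℝ := fun x => m * (s ^ 2 - ∑ k, x k * x k) with hψ
  have hψs : SmoothFn ψ := by
    rw [hψ]
    fun_prop
  have hnorm : ∀ x : E3, ∑ k, x k * x k = ‖x‖ ^ 2 := fun x => by
    rw [EuclideanSpace.norm_sq_eq]
    simp [sq]
  have hψpd : ∀ i x, pd i ψ x = -(2 * m) * x i := by
    intro i x
    rw [hψ, pd_const_mul i m (by fun_prop), pd_sub i (by fun_prop) (by fun_prop), pd_const]
    simp only [Fin.sum_univ_three]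
    rw [pd_add i (by fun_prop) (by fun_prop), pd_add i (by fun_prop) (by fun_prop),
      pd_mul i (by fun_prop) (by fun_prop), pd_mul i (by fun_prop) (by fun_prop),
      pd_mul i (by fun_prop) (by fun_prop)]
    simp only [pd_coord]
    fin_cases i <;> simp <;> ring
  have hφs : SmoothFn fun x => Real.smoothTransition (ψ x) := hχs.comp hψs
  have hφpd : ∀ i x, pd i (fun x => Real.smoothTransition (ψ x)) x
      = deriv Real.smoothTransition (ψ x) * (-(2 * m) * x i) := fun i x => by
    rw [pd_comp_real i (hχs.differentiable (by simp)) hψs, hψpd]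
  have hts : tsupport (fun x => Real.smoothTransition (ψ x)) ⊆ closedBall (0 : E3) s := by
    refine closure_minimal (fun x hx => ?_) isClosed_closedBall
    by_contra hxs
    refine hx (Real.smoothTransition.zero_of_nonpos ?_)
    rw [mem_closedBall_zero_iff, not_le] at hxs
    rw [hψ]
    simp only [hnorm]
    exact mul_nonpos_of_nonneg_of_nonpos hm0.le (by nlinarith)
  have hcoord : ∀ i, ∀ x ∈ closedBall (0 : E3) s, |x i| ≤ 2 := fun i x hx =>
    (abs_coord_le_norm x i).trans ((mem_closedBall_zero_iff.1 hx).trans hs)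
  refine ⟨fun x => Real.smoothTransition (ψ x), hφs, fun x => Real.smoothTransition.nonneg _,
    fun x => Real.smoothTransition.le_one _, fun x hx => ?_, hts, fun i x => ?_, fun i j x => ?_⟩
  · refine Real.smoothTransition.one_of_one_le ?_
    rw [mem_closedBall_zero_iff] at hx
    rw [hψ]
    simp only [hnorm]
    rw [hm, inv_mul_eq_div, le_div_iff₀ hsr]
    nlinarith [norm_nonneg x]
  · by_cases hx : x ∈ closedBall (0 : E3) s
    · rw [hφpd, abs_mul, abs_mul, abs_neg, abs_of_pos (by positivity : 0 < 2 * m)]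
      calc _ ≤ M * (2 * (1 / d) * 2) := by
            gcongr
            · exact hM _
            · exact hcoord i x hx
        _ ≤ _ := by
            rw [mul_div_assoc' , ← sub_nonneg]
            have : 18 * (M + M' + 1) / d - M * (2 * 1 / d * 2) = (14 * M + 18 * M' + 18) / d := by
              field_simp; ring
            rw [this]; positivity
    · rw [pd_eq_zero_of_tsupport_subset hts hx, abs_zero]
      positivity
  · by_cases hx : x ∈ closedBall (0 : E3) s
    · have e : (fun y => pd j (fun x => Real.smoothTransition (ψ x)) y)
          = fun y => deriv Real.smoothTransition (ψ y) * (-(2 * m) * y j) := funext (hφpd j)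
      rw [e, pd_mul i (f := fun y => deriv Real.smoothTransition (ψ y)) (hχ's.comp hψs)
          (by fun_prop),
        pd_comp_real i (hχ's.differentiable (by simp)) hψs, hψpd,
        pd_const_mul i _ (by fun_prop), pd_coord]
      have h1 : |deriv (deriv Real.smoothTransition) (ψ x) * (-(2 * m) * x i) * (-(2 * m) * x j)|
          ≤ M' * (2 * (1 / d) * 2) * (2 * (1 / d) * 2) := by
        rw [abs_mul, abs_mul, abs_mul, abs_mul, abs_neg, abs_of_pos (by positivity : 0 < 2 * m)]
        gcongr
        · exact hM' _
        · exact hcoord i x hx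
        · exact hcoord j x hx
      have h2 : |deriv Real.smoothTransition (ψ x) * (-(2 * m) * if i = j then 1 else 0)|
          ≤ M * (2 * (1 / d) * 1) := by
        rw [abs_mul, abs_mul, abs_neg, abs_of_pos (by positivity : 0 < 2 * m)]
        gcongr
        · exact hM _
        · split_ifs <;> simp
      refine (abs_add_le _ _).trans ((add_le_add h1 h2).trans ?_)
      rw [← sub_nonneg]
      have : 18 * (M + M' + 1) / d ^ 2
          - (M' * (2 * (1 / d) * 2) * (2 * (1 / d) * 2) + M * (2 * (1 / d) * 1))
          = (2 * M' + 18 + 16 * M + 2 * M * (1 - d)) / d ^ 2 := by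
        field_simp; ring
      rw [this]
      have : 0 ≤ 1 - d := by linarith
      positivity
    · have h0 : pd i (fun y => pd j (fun x => Real.smoothTransition (ψ x)) y) x = 0 := by
        refine pd_eq_zero_of_tsupport_subset (S := closedBall (0 : E3) s) ?_ hx i
        refine closure_minimal (fun y hy => ?_) isClosed_closedBall
        by_contra hys
        exact hy (pd_eq_zero_of_tsupport_subset hts hys j)
      rw [h0, abs_zero]
      positivity

theorem integral_abs_mul_le {μ : Measure E3} {f g : E3 → ℝ}
    (hf : Integrable (fun x => (f x) ^ 2) μ) (hg : Integrable (fun x => (g x) ^ 2) μ)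
    (hfg : Integrable (fun x => |f x| * |g x|) μ) {F G : ℝ} (hF : 0 ≤ F) (hG : 0 ≤ G)
    (hFb : ∫ x, (f x) ^ 2 ∂μ ≤ F ^ 2) (hGb : ∫ x, (g x) ^ 2 ∂μ ≤ G ^ 2) :
    ∫ x, |f x| * |g x| ∂μ ≤ F * G := by
  have hquad : ∀ t : ℝ, 0 ≤ (∫ x, (f x) ^ 2 ∂μ) * (t * t)
      + (2 * ∫ x, |f x| * |g x| ∂μ) * t + ∫ x, (g x) ^ 2 ∂μ := by
    intro t
    have h0 : 0 ≤ ∫ x, (|f x| * t + |g x|) ^ 2 ∂μ := integral_nonneg fun x => sq_nonneg _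
    have e : (fun x => (|f x| * t + |g x|) ^ 2)
        = fun x => ((t * t) * (f x) ^ 2 + (2 * t) * (|f x| * |g x|)) + (g x) ^ 2 := by
      funext x
      linear_combination (t * t) * sq_abs (f x) + sq_abs (g x)
    have hi : Integrable (fun x => (t * t) * (f x) ^ 2 + (2 * t) * (|f x| * |g x|)) μ :=
      (hf.const_mul _).add (hfg.const_mul _)
    rw [e, integral_add hi hg,
      integral_add (hf.const_mul _) (hfg.const_mul _), integral_const_mul, integral_const_mul] at h0
    linarith
  have hd := discrim_le_zero hquad
  rw [discrim] at hd
  have h1 : (∫ x, |f x| * |g x| ∂μ) ^ 2 ≤ (F * G) ^ 2 := by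
    have : (∫ x, (f x) ^ 2 ∂μ) * (∫ x, (g x) ^ 2 ∂μ) ≤ F ^ 2 * G ^ 2 :=
      mul_le_mul hFb hGb (integral_nonneg fun x => sq_nonneg _) (sq_nonneg _)
    nlinarith
  exact abs_le_of_sq_le_sq' h1 (mul_nonneg hF hG) |>.2

theorem setIntegral_abs_mul_le {f g : E3 → ℝ} (hf : Continuous f) (hg : Continuous g) {r F G : ℝ}
    (hF : 0 ≤ F) (hG : 0 ≤ G) (hFb : ∫ x in closedBall (0 : E3) r, (f x) ^ 2 ≤ F ^ 2)
    (hGb : ∫ x in closedBall (0 : E3) r, (g x) ^ 2 ≤ G ^ 2) :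
    ∫ x in closedBall (0 : E3) r, |f x| * |g x| ≤ F * G :=
  integral_abs_mul_le (integrableOn_closedBall (by fun_prop) r)
    (integrableOn_closedBall (by fun_prop) r) (integrableOn_closedBall (by fun_prop) r) hF hG hFb hGb

theorem norm_fderiv_sq_le (f : E3 → ℝ) (x : E3) :
    ‖fderiv ℝ f x‖ ^ 2 ≤ ∑ i, (pd i f x) ^ 2 := by
  have h0 : 0 ≤ ∑ i, (pd i f x) ^ 2 := Finset.sum_nonneg fun i _ => sq_nonneg _
  have h : ‖fderiv ℝ f x‖ ≤ √(∑ i, (pd i f x) ^ 2) := by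
    refine ContinuousLinearMap.opNorm_le_bound _ (Real.sqrt_nonneg _) fun v => ?_
    rw [fderiv_apply_eq_sum_pd, Real.norm_eq_abs, EuclideanSpace.norm_eq, ← Real.sqrt_mul h0]
    refine Real.abs_le_sqrt ?_
    rw [mul_comm]
    simpa using Finset.sum_mul_sq_le_sq_mul_sq Finset.univ (fun k => v k) (fun k => pd k f x)
  calc _ ≤ (√(∑ i, (pd i f x) ^ 2)) ^ 2 := by gcongr
    _ = _ := Real.sq_sqrt h0

theorem integral_norm_fderiv_sq_le {f : E3 → ℝ} (hf : SmoothFn f) (hc : HasCompactSupport f) :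
    ∫ x, ‖fderiv ℝ f x‖ ^ 2 ≤ ∫ x, ∑ i, (pd i f x) ^ 2 := by
  have hf' : Continuous fun x => ‖fderiv ℝ f x‖ ^ 2 :=
    (hf.continuous_fderiv (by simp)).norm.pow 2
  have hcf' : HasCompactSupport fun x => ‖fderiv ℝ f x‖ ^ 2 :=
    (hc.fderiv ℝ).norm.comp_left (g := fun t : ℝ => t ^ 2) (by simp)
  refine integral_mono (hf'.integrable_of_hasCompactSupport hcf')
    (integrable_finsetSum _ fun i _ => ?_) fun x => norm_fderiv_sq_le f x
  have hp : Continuous fun x => (pd i f x) ^ 2 := (smoothFn_pd i hf).continuous.pow 2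
  have hcp : HasCompactSupport fun x => (pd i f x) ^ 2 :=
    (hasCompactSupport_pd i hc).comp_left (g := fun t : ℝ => t ^ 2) (by simp)
  exact hp.integrable_of_hasCompactSupport hcp

theorem exists_sobolev : ∃ S : ℝ, 0 ≤ S ∧ ∀ f : E3 → ℝ, SmoothFn f → HasCompactSupport f →
    ∫ x, (f x) ^ 6 ≤ (S * ∫ x, ∑ i, (pd i f x) ^ 2) ^ 3 := by
  obtain ⟨C, hC⟩ : ∃ C : ℝ, C = NNReal.toReal (SNormLESNormFDerivOfEqConst ℝ (volume : Measure E3) 2) :=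
    ⟨_, rfl⟩
  have hC0 : 0 ≤ C := hC ▸ NNReal.coe_nonneg _
  refine ⟨C ^ 2, sq_nonneg _, fun f hf hc => ?_⟩
  have hf' : Continuous (fderiv ℝ f) := hf.continuous_fderiv (by simp)
  have hcf' : HasCompactSupport (fderiv ℝ f) := hc.fderiv ℝ
  have hdim : Module.finrank ℝ E3 = 3 := by simp
  have h := eLpNorm_le_eLpNorm_fderiv_of_eq (F := ℝ) (volume : Measure E3) (p := 2) (p' := 6)
    (hf.of_le (by simp)) hc (by norm_num) (by rw [hdim]; norm_num) (by rw [hdim]; norm_num)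
  have m6 : MemLp f 6 (volume : Measure E3) := hf.continuous.memLp_of_hasCompactSupport hc
  have m2 : MemLp (fderiv ℝ f) 2 (volume : Measure E3) := hf'.memLp_of_hasCompactSupport hcf'
  have e6 := m6.eLpNorm_eq_integral_rpow_norm (by norm_num) (by norm_num)
  have e2 := m2.eLpNorm_eq_integral_rpow_norm (by norm_num) (by norm_num)
  set I6 := ∫ x, (f x) ^ 6 with hI6
  set I2 := ∫ x, ‖fderiv ℝ f x‖ ^ 2 with hI2
  have hI60 : 0 ≤ I6 := integral_nonneg fun x => by positivity
  have hI20 : 0 ≤ I2 := integral_nonneg fun x => by positivity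
  have e6' : eLpNorm f 6 (volume : Measure E3) = ENNReal.ofReal (I6 ^ (6⁻¹ : ℝ)) := by
    rw [e6, hI6]
    have : ∀ a : E3, ‖f a‖ ^ (6 : ℝ≥0∞).toReal = (f a) ^ 6 := fun a => by
      have : (6 : ℝ≥0∞).toReal = ((6 : ℕ) : ℝ) := by norm_num
      rw [this, Real.rpow_natCast, Real.norm_eq_abs, Even.pow_abs ⟨3, rfl⟩]
    simp_rw [this]
    norm_num
  have e2' : eLpNorm (fderiv ℝ f) 2 (volume : Measure E3) = ENNReal.ofReal (I2 ^ (2⁻¹ : ℝ)) := by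
    rw [e2, hI2]
    have : ∀ a : E3, ‖fderiv ℝ f a‖ ^ (2 : ℝ≥0∞).toReal = ‖fderiv ℝ f a‖ ^ 2 := fun a => by
      have : (2 : ℝ≥0∞).toReal = ((2 : ℕ) : ℝ) := by norm_num
      rw [this, Real.rpow_natCast]
    simp_rw [this]
    norm_num
  have h' : I6 ^ (6⁻¹ : ℝ) ≤ C * I2 ^ (2⁻¹ : ℝ) := by
    have h2 : ENNReal.ofReal (I6 ^ (6⁻¹ : ℝ)) ≤ ENNReal.ofReal (C * I2 ^ (2⁻¹ : ℝ)) := by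
      rw [ENNReal.coe_ofNat, ENNReal.coe_ofNat, e6', e2'] at h
      rw [ENNReal.ofReal_mul hC0, hC, ENNReal.ofReal_coe_nnreal]
      exact h
    exact (ENNReal.ofReal_le_ofReal_iff (mul_nonneg hC0 (Real.rpow_nonneg hI20 _))).1 h2
  have hfin : I6 ≤ (C ^ 2 * I2) ^ 3 := by
    calc I6 = (I6 ^ (6⁻¹ : ℝ)) ^ 6 := by
          rw [← Real.rpow_natCast, ← Real.rpow_mul hI60]; norm_num
      _ ≤ (C * I2 ^ (2⁻¹ : ℝ)) ^ 6 := by gcongr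
      _ = (C ^ 2 * (I2 ^ (2⁻¹ : ℝ)) ^ 2) ^ 3 := by ring
      _ = _ := by
          rw [← Real.rpow_natCast (I2 ^ (2⁻¹ : ℝ)), ← Real.rpow_mul hI20]; norm_num
  refine hfin.trans ?_
  have hle : I2 ≤ ∫ x, ∑ i, (pd i f x) ^ 2 := integral_norm_fderiv_sq_le hf hc
  gcongr

theorem exists_localSobolev : ∃ S : ℝ, 0 ≤ S ∧ ∀ (r s : ℝ), 1 ≤ r → r < s → s ≤ 2 →
    ∀ (f : E3 → ℝ) (X Z : ℝ), SmoothFn f → 0 ≤ X → 0 ≤ Z → X / (s - r) ≤ Z →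
    ∫ x in closedBall (0 : E3) s, (f x) ^ 2 ≤ X ^ 2 →
    (∀ i, ∫ x in closedBall (0 : E3) s, (pd i f x) ^ 2 ≤ Z ^ 2) →
    ∫ x in closedBall (0 : E3) r, (f x) ^ 4 ≤ S * (X * Z ^ 3) := by
  obtain ⟨C, hC1, hcut⟩ := exists_cutoff
  obtain ⟨S, hS0, hS⟩ := exists_sobolev
  refine ⟨(1 + S * (6 * (C ^ 2 + 1))) ^ 2, sq_nonneg _, fun r s hr hrs hs2 f X Z hf hX hZ hXZ hfX hfZ => ?_⟩
  obtain ⟨φ, hφ, hφ0, hφ1, hφr, hφs, hφd, -⟩ := hcut r s hr hrs hs2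
  have hd0 : 0 < s - r := by linarith
  have hfc := hf.continuous
  have hφc := hφ.continuous
  have hfpc := fun i => (smoothFn_pd i hf).continuous
  have hφpc := fun i => (smoothFn_pd i hφ).continuous
  set g : E3 → ℝ := fun x => φ x * f x with hg
  have hgs : SmoothFn g := hφ.mul hf
  have hgsupp : tsupport g ⊆ closedBall (0 : E3) s :=
    (closure_mono (Function.support_mul_subset_left _ _)).trans hφs
  have hgc := hasCompactSupport_of_tsupport_subset hgsupp
  have hgcont := hgs.continuous
  have hgpc := fun i => (smoothFn_pd i hgs).continuous
  have hφsq : ∀ x, φ x ^ 2 ≤ 1 := fun x => by nlinarith [hφ0 x, hφ1 x]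
  have hg2 : ∫ x in closedBall (0 : E3) s, (g x) ^ 2 ≤ X ^ 2 := by
    refine le_trans (setIntegral_mono_closedBall (by fun_prop) (by fun_prop) fun x _ => ?_) hfX
    rw [hg]
    simp only [mul_pow]
    nlinarith [hφsq x, sq_nonneg (f x)]
  have hgp : ∀ i, ∫ x in closedBall (0 : E3) s, (pd i g x) ^ 2 ≤ 2 * (C ^ 2 + 1) * Z ^ 2 := by
    intro i
    have hb : ∀ x, (pd i g x) ^ 2
        ≤ 2 * (C / (s - r)) ^ 2 * (f x) ^ 2 + 2 * (pd i f x) ^ 2 := by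
      intro x
      rw [hg, pd_mul i hφ hf]
      have h1 : (pd i φ x) ^ 2 ≤ (C / (s - r)) ^ 2 := sq_le_sq' (abs_le.1 (hφd i x)).1
        (abs_le.1 (hφd i x)).2
      have h2 := hφsq x
      nlinarith [sq_nonneg (pd i φ x * f x - φ x * pd i f x),
        mul_le_mul_of_nonneg_right h1 (sq_nonneg (f x)),
        mul_le_mul_of_nonneg_right h2 (sq_nonneg (pd i f x))]
    refine (setIntegral_mono_closedBall (by fun_prop) (by fun_prop) fun x _ => hb x).trans ?_
    rw [integral_add (integrableOn_closedBall (by fun_prop) s)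
      (integrableOn_closedBall (by fun_prop) s), integral_const_mul, integral_const_mul]
    have h3 : (X / (s - r)) ^ 2 ≤ Z ^ 2 := pow_le_pow_left₀ (by positivity) hXZ 2
    calc _ ≤ 2 * (C / (s - r)) ^ 2 * X ^ 2 + 2 * Z ^ 2 := by gcongr; exact hfZ i
      _ = 2 * C ^ 2 * (X / (s - r)) ^ 2 + 2 * Z ^ 2 := by field_simp
      _ ≤ 2 * C ^ 2 * Z ^ 2 + 2 * Z ^ 2 := by gcongr
      _ = _ := by ring
  have hgrad : ∫ x, ∑ i, (pd i g x) ^ 2 ≤ 6 * (C ^ 2 + 1) * Z ^ 2 := by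
    rw [← setIntegral_eq_integral_of_forall_compl_eq_zero (s := closedBall (0 : E3) s)]
    · rw [integral_finsetSum _ fun i _ => integrableOn_closedBall (by fun_prop) s]
      calc _ ≤ ∑ i : Fin 3, 2 * (C ^ 2 + 1) * Z ^ 2 := Finset.sum_le_sum fun i _ => hgp i
        _ = _ := by simp; ring
    · intro x hx
      simp [pd_eq_zero_of_tsupport_subset hgsupp hx]
  set T := 1 + S * (6 * (C ^ 2 + 1)) with hT
  have hT1 : 1 ≤ T := by rw [hT]; linarith [mul_nonneg hS0 (by positivity : 0 ≤ 6 * (C ^ 2 + 1))]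
  have hg6 : ∫ x in closedBall (0 : E3) s, ((g x) ^ 3) ^ 2 ≤ (T ^ 2 * Z ^ 3) ^ 2 := by
    rw [setIntegral_eq_integral_of_forall_compl_eq_zero fun x hx => by
      rw [eq_zero_of_tsupport_subset hgsupp hx]; simp]
    have h0 : 0 ≤ ∫ x, ∑ i, (pd i g x) ^ 2 :=
      integral_nonneg fun x => Finset.sum_nonneg fun i _ => sq_nonneg _
    calc _ = ∫ x, (g x) ^ 6 := by simp_rw [← pow_mul]
      _ ≤ (S * ∫ x, ∑ i, (pd i g x) ^ 2) ^ 3 := hS g hgs hgc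
      _ ≤ (S * (6 * (C ^ 2 + 1) * Z ^ 2)) ^ 3 := by gcongr
      _ = (S * (6 * (C ^ 2 + 1))) ^ 3 * Z ^ 6 := by ring
      _ ≤ T ^ 3 * Z ^ 6 := by gcongr; rw [hT]; linarith
      _ ≤ T ^ 4 * Z ^ 6 := by gcongr; norm_num
      _ = _ := by ring
  calc ∫ x in closedBall (0 : E3) r, (f x) ^ 4
      = ∫ x in closedBall (0 : E3) r, |g x| * |(g x) ^ 3| := by
        refine setIntegral_congr_fun measurableSet_closedBall fun x hx => ?_
        simp only [hg, hφr x hx, one_mul]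
        rw [← abs_mul, ← pow_succ', abs_of_nonneg (Even.pow_nonneg ⟨2, rfl⟩ _)]
    _ ≤ ∫ x in closedBall (0 : E3) s, |g x| * |(g x) ^ 3| :=
        setIntegral_mono_set (integrableOn_closedBall (by fun_prop) s)
          (Eventually.of_forall fun x => by positivity)
          (closedBall_subset_closedBall hrs.le).eventuallyLE
    _ ≤ X * (T ^ 2 * Z ^ 3) :=
        setIntegral_abs_mul_le hgcont (by fun_prop) hX (by positivity) hg2 hg6
    _ = _ := by ring

/-- Curl of a vector field given by its components. -/
def crl (v : Fin 3 → E3 → ℝ) (j : Fin 3) (x : E3) : ℝ :=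
  ![pd 1 (v 2) x - pd 2 (v 1) x, pd 2 (v 0) x - pd 0 (v 2) x, pd 0 (v 1) x - pd 1 (v 0) x] j

/-- Pointwise cross product of two vector fields given by their components. -/
def crossField (v z : Fin 3 → E3 → ℝ) (j : Fin 3) (x : E3) : ℝ :=
  ![v 1 x * z 2 x - v 2 x * z 1 x, v 2 x * z 0 x - v 0 x * z 2 x,
    v 0 x * z 1 x - v 1 x * z 0 x] j

/-- The magneto-micropolar system for component functions, in the form it takes after dilating
by `κ`. -/
structure IsDilatedSolution (κ : ℝ) (u w b : Fin 3 → E3 → ℝ) (P : E3 → ℝ) : Prop where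
  smooth_u : ∀ j, SmoothFn (u j)
  smooth_w : ∀ j, SmoothFn (w j)
  smooth_b : ∀ j, SmoothFn (b j)
  smooth_P : SmoothFn P
  eq_u : ∀ x j, pd j P x = lap (u j) x - (∑ i, u i x * pd i (u j) x) + κ * crl w j x
    + ∑ i, b i x * pd i (b j) x
  eq_w : ∀ x j, lap (w j) x = (∑ i, u i x * pd i (w j) x)
    - pd j (fun y => ∑ i, pd i (w i) y) x - κ * crl u j x + 2 * κ ^ 2 * w j x
  eq_b : ∀ x j, lap (b j) x = (∑ i, u i x * pd i (b j) x) - ∑ i, b i x * pd i (u j) x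
  div_u : ∀ x, ∑ i, pd i (u i) x = 0
  div_b : ∀ x, ∑ i, pd i (b i) x = 0

theorem pd_sum (i : Fin 3) {F : Fin 3 → E3 → ℝ} (hF : ∀ j, SmoothFn (F j)) (x : E3) :
    pd i (fun y => ∑ j, F j y) x = ∑ j, pd i (F j) x := by
  simp only [Fin.sum_univ_three]
  rw [pd_add i ((hF 0).add (hF 1)) (hF 2), pd_add i (hF 0) (hF 1)]

section Divergence

variable {v z : Fin 3 → E3 → ℝ} {h : E3 → ℝ}

theorem div_mul_field (hv : ∀ j, SmoothFn (v j)) (hh : SmoothFn h) (x : E3) :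
    ∑ i, pd i (fun y => v i y * h y) x
      = (∑ i, pd i (v i) x) * h x + ∑ i, v i x * pd i h x := by
  rw [Finset.sum_mul, ← Finset.sum_add_distrib]
  exact Finset.sum_congr rfl fun i _ => pd_mul i (hv i) hh x

theorem div_mul_grad (hv : ∀ j, SmoothFn (v j)) (x : E3) :
    ∑ i, pd i (fun y => ∑ j, v j y * pd i (v j) y) x
      = (∑ i, ∑ j, (pd i (v j) x) ^ 2) + ∑ j, v j x * lap (v j) x := by
  have e : ∀ i, pd i (fun y => ∑ j, v j y * pd i (v j) y) x
      = ∑ j, ((pd i (v j) x) ^ 2 + v j x * pd i (fun y => pd i (v j) y) x) := by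
    intro i
    rw [pd_sum i fun j => (hv j).mul (smoothFn_pd i (hv j))]
    refine Finset.sum_congr rfl fun j _ => ?_
    rw [pd_mul i (hv j) (smoothFn_pd i (hv j))]
    ring
  simp_rw [e]
  simp only [lap, Fin.sum_univ_three]
  ring

theorem pd_sum_mul (i : Fin 3) (hv : ∀ j, SmoothFn (v j)) (hz : ∀ j, SmoothFn (z j)) (x : E3) :
    pd i (fun y => ∑ j, v j y * z j y) x = ∑ j, (pd i (v j) x * z j x + v j x * pd i (z j) x) := by
  rw [pd_sum i fun j => (hv j).mul (hz j)]
  exact Finset.sum_congr rfl fun j _ => pd_mul i (hv j) (hz j) x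

theorem div_crossField (hv : ∀ j, SmoothFn (v j)) (hz : ∀ j, SmoothFn (z j)) (x : E3) :
    ∑ i, pd i (crossField v z i) x
      = (∑ i, z i x * crl v i x) - ∑ i, v i x * crl z i x := by
  have e : ∀ i j k : Fin 3, pd i (fun y => v j y * z k y - v k y * z j y) x
      = (pd i (v j) x * z k x + v j x * pd i (z k) x)
        - (pd i (v k) x * z j x + v k x * pd i (z j) x) := by
    intro i j k
    rw [pd_sub i ((hv j).mul (hz k)) ((hv k).mul (hz j)), pd_mul i (hv j) (hz k),
      pd_mul i (hv k) (hz j)]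
  have e0 : crossField v z 0 = fun y => v 1 y * z 2 y - v 2 y * z 1 y := rfl
  have e1 : crossField v z 1 = fun y => v 2 y * z 0 y - v 0 y * z 2 y := rfl
  have e2 : crossField v z 2 = fun y => v 0 y * z 1 y - v 1 y * z 0 y := rfl
  simp only [Fin.sum_univ_three, e0, e1, e2, e, crl]
  simp
  ring

theorem div_convection (hv : ∀ j, SmoothFn (v j)) (hdiv : ∀ x, ∑ i, pd i (v i) x = 0) (x : E3) :
    ∑ i, pd i (fun y => ∑ j, v j y * pd j (v i) y) x = ∑ i, ∑ j, pd i (v j) x * pd j (v i) x := by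
  have e : ∀ i, pd i (fun y => ∑ j, v j y * pd j (v i) y) x
      = ∑ j, (pd i (v j) x * pd j (v i) x + v j x * pd j (fun y => pd i (v i) y) x) := by
    intro i
    rw [pd_sum_mul i hv fun j => smoothFn_pd j (hv i)]
    exact Finset.sum_congr rfl fun j _ => by rw [pd_comm i j (hv i)]
  have h0 : ∀ j, ∑ i, pd j (fun y => pd i (v i) y) x = 0 := by
    intro j
    rw [← pd_sum j fun i => smoothFn_pd i (hv i)]
    simp only [hdiv, pd_const]
  simp_rw [e, Finset.sum_add_distrib]
  rw [Finset.sum_comm (f := fun i j => v j x * pd j (fun y => pd i (v i) y) x)]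
  simp_rw [← Finset.mul_sum, h0]
  simp

theorem sum_crl_sq (v : Fin 3 → E3 → ℝ) (x : E3) :
    ∑ i, (crl v i x) ^ 2 = (∑ i, ∑ j, (pd i (v j) x) ^ 2) - ∑ i, ∑ j, pd i (v j) x * pd j (v i) x := by
  simp only [Fin.sum_univ_three, crl]
  simp
  ring

theorem smoothFn_crossField (hv : ∀ j, SmoothFn (v j)) (hz : ∀ j, SmoothFn (z j)) (i : Fin 3) :
    SmoothFn (crossField v z i) := by
  unfold crossField
  fin_cases i <;> simp <;> fun_prop

end Divergence

/-- The energy flux of the system, without the pressure contribution. -/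
def energyFlux (κ : ℝ) (u w b : Fin 3 → E3 → ℝ) (i : Fin 3) (x : E3) : ℝ :=
  -(∑ j, u j x * pd i (u j) x) - (∑ j, w j x * pd i (w j) x) - (∑ j, b j x * pd i (b j) x)
    - w i x * (∑ k, pd k (w k) x)
    + 2⁻¹ * (u i x * ((∑ j, u j x * u j x) + (∑ j, w j x * w j x) + ∑ j, b j x * b j x))
    - b i x * (∑ j, u j x * b j x) + κ * crossField u w i x
    + (2 / 3) * ∑ j, u j x * pd j (u i) x

/-- Squared norm of the gradient of a vector field given by its components. -/
def gradEnergy (v : Fin 3 → E3 → ℝ) (x : E3) : ℝ := ∑ i, ∑ j, (pd i (v j) x) ^ 2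

section Energy

variable {κ : ℝ} {u w b : Fin 3 → E3 → ℝ} {P : E3 → ℝ}

theorem IsDilatedSolution.smoothFn_energyFlux (hs : IsDilatedSolution κ u w b P) (i : Fin 3) :
    SmoothFn (energyFlux κ u w b i) := by
  have hu := hs.smooth_u
  have hw := hs.smooth_w
  have hb := hs.smooth_b
  have hc := smoothFn_crossField hu hw i
  unfold energyFlux
  fun_prop

theorem IsDilatedSolution.pd_flux (hs : IsDilatedSolution κ u w b P) (i : Fin 3) (x : E3) :
    pd i (fun y => energyFlux κ u w b i y + u i y * P y) x
      = -pd i (fun y => ∑ j, u j y * pd i (u j) y) x - pd i (fun y => ∑ j, w j y * pd i (w j) y) x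
        - pd i (fun y => ∑ j, b j y * pd i (b j) y) x
        - pd i (fun y => w i y * (∑ k, pd k (w k) y)) x
        + 2⁻¹ * pd i (fun y => u i y *
            ((∑ j, u j y * u j y) + (∑ j, w j y * w j y) + ∑ j, b j y * b j y)) x
        - pd i (fun y => b i y * (∑ j, u j y * b j y)) x + κ * pd i (crossField u w i) x
        + (2 / 3) * pd i (fun y => ∑ j, u j y * pd j (u i) y) x
        + pd i (fun y => u i y * P y) x := by
  have hu := hs.smooth_u
  have hw := hs.smooth_w
  have hb := hs.smooth_b
  have hP := hs.smooth_P
  have hc := smoothFn_crossField hu hw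
  rw [pd_add i (hs.smoothFn_energyFlux i) (by fun_prop)]
  unfold energyFlux
  rw [pd_add i (by fun_prop) (by fun_prop), pd_add i (by fun_prop) (by fun_prop),
    pd_sub i (by fun_prop) (by fun_prop), pd_add i (by fun_prop) (by fun_prop),
    pd_sub i (by fun_prop) (by fun_prop), pd_sub i (by fun_prop) (by fun_prop),
    pd_sub i (by fun_prop) (by fun_prop), pd_neg, pd_const_mul i _ (by fun_prop),
    pd_const_mul i _ (hc i), pd_const_mul i _ (by fun_prop)]

theorem two_mul_le_young (κ s t : ℝ) :
    2 * κ * (s * t) ≤ 3 / 2 * (κ * s) ^ 2 + 2 / 3 * t ^ 2 := by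
  nlinarith [sq_nonneg (3 * (κ * s) - 2 * t)]

theorem IsDilatedSolution.div_flux_le (hs : IsDilatedSolution κ u w b P) (x : E3) :
    (3⁻¹ * gradEnergy u x + gradEnergy w x + gradEnergy b x + 2⁻¹ * ∑ j, (κ * w j x) ^ 2)
      + ∑ i, pd i (fun y => energyFlux κ u w b i y + u i y * P y) x ≤ 0 := by
  have hu := hs.smooth_u
  have hw := hs.smooth_w
  have hb := hs.smooth_b
  have hP := hs.smooth_P
  have hq : SmoothFn fun y => (∑ j, u j y * u j y) + (∑ j, w j y * w j y) + ∑ j, b j y * b j y := by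
    fun_prop
  have hub : SmoothFn fun y => ∑ j, u j y * b j y := by fun_prop
  have hD : SmoothFn fun y => ∑ k, pd k (w k) y := by fun_prop
  simp_rw [hs.pd_flux, Finset.sum_add_distrib, Finset.sum_sub_distrib, Finset.sum_add_distrib,
    Finset.sum_sub_distrib, Finset.sum_neg_distrib, ← Finset.mul_sum]
  rw [div_mul_grad hu, div_mul_grad hw, div_mul_grad hb, div_mul_field hw hD, div_mul_field hu hq,
    div_mul_field hb hub, div_crossField hu hw, div_convection hu hs.div_u, div_mul_field hu hP,
    hs.div_u, hs.div_b]
  have hqd : ∀ i, pd i (fun y => (∑ j, u j y * u j y) + (∑ j, w j y * w j y) + ∑ j, b j y * b j y) x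
      = 2 * (∑ j, u j x * pd i (u j) x) + 2 * (∑ j, w j x * pd i (w j) x)
        + 2 * ∑ j, b j x * pd i (b j) x := by
    intro i
    rw [pd_add i (by fun_prop) (by fun_prop), pd_add i (by fun_prop) (by fun_prop),
      pd_sum_mul i hu hu, pd_sum_mul i hw hw, pd_sum_mul i hb hb]
    simp only [Fin.sum_univ_three]
    ring
  simp_rw [hqd, pd_sum_mul _ hu hb, hs.eq_u, hs.eq_w, hs.eq_b]
  have hcurl := sum_crl_sq u x
  have hy0 := two_mul_le_young κ (w 0 x) (crl u 0 x)
  have hy1 := two_mul_le_young κ (w 1 x) (crl u 1 x)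
  have hy2 := two_mul_le_young κ (w 2 x) (crl u 2 x)
  have hDsq := sq_nonneg (∑ k, pd k (w k) x)
  unfold gradEnergy
  generalize (fun y => ∑ k, pd k (w k) y) = D
  simp only [Fin.sum_univ_three] at *
  linarith

/-- `f` is continuous and its `L¹` norm on the closed ball of radius `σ` is at most `c`. -/
def L1Le (σ : ℝ) (f : E3 → ℝ) (c : ℝ) : Prop :=
  Continuous f ∧ ∫ x in closedBall (0 : E3) σ, |f x| ≤ c

/-- `f` is continuous and its `L²` norm on the closed ball of radius `σ` is at most `c`. -/
def L2Le (σ : ℝ) (f : E3 → ℝ) (c : ℝ) : Prop :=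
  Continuous f ∧ ∫ x in closedBall (0 : E3) σ, (f x) ^ 2 ≤ c ^ 2

section Norms

variable {σ c d : ℝ} {f g : E3 → ℝ}

theorem L1Le.of_abs_le (hg : L1Le σ g c) (hf : Continuous f) (h : ∀ x, |f x| ≤ |g x|) :
    L1Le σ f c :=
  ⟨hf, (setIntegral_mono_closedBall hf.abs hg.1.abs fun x _ => h x).trans hg.2⟩

theorem L1Le.add (hf : L1Le σ f c) (hg : L1Le σ g d) : L1Le σ (fun x => f x + g x) (c + d) := by
  have hfc := hf.1
  have hgc := hg.1
  refine ⟨by fun_prop, ?_⟩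
  calc _ ≤ ∫ x in closedBall (0 : E3) σ, (|f x| + |g x|) :=
        setIntegral_mono_closedBall (by fun_prop) (by fun_prop) fun x _ => abs_add_le _ _
    _ = _ := integral_add (integrableOn_closedBall (by fun_prop) σ)
        (integrableOn_closedBall (by fun_prop) σ)
    _ ≤ _ := add_le_add hf.2 hg.2

theorem L1Le.const_mul (a : ℝ) (hf : L1Le σ f c) : L1Le σ (fun x => a * f x) (|a| * c) := by
  have hfc := hf.1
  refine ⟨by fun_prop, ?_⟩
  simp_rw [abs_mul]
  rw [integral_const_mul]
  exact mul_le_mul_of_nonneg_left hf.2 (abs_nonneg a)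

theorem L1Le.neg (hf : L1Le σ f c) : L1Le σ (fun x => -f x) c :=
  hf.of_abs_le hf.1.neg fun _ => (abs_neg _).le

theorem L1Le.sub (hf : L1Le σ f c) (hg : L1Le σ g d) : L1Le σ (fun x => f x - g x) (c + d) := by
  simpa only [sub_eq_add_neg] using hf.add hg.neg

theorem L1Le.sum {F : Fin 3 → E3 → ℝ} (hF : ∀ j, L1Le σ (F j) c) :
    L1Le σ (fun x => ∑ j, F j x) (3 * c) := by
  have h := ((hF 0).add (hF 1)).add (hF 2)
  simp only [Fin.sum_univ_three]
  rw [show 3 * c = c + c + c by ring]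
  exact h

theorem L2Le.mul (hf : L2Le σ f c) (hg : L2Le σ g d) (hc : 0 ≤ c) (hd : 0 ≤ d) :
    L1Le σ (fun x => f x * g x) (c * d) := by
  refine ⟨hf.1.mul hg.1, ?_⟩
  simp_rw [abs_mul]
  exact setIntegral_abs_mul_le hf.1 hg.1 hc hd hf.2 hg.2

theorem L2Le.add (hf : L2Le σ f c) (hg : L2Le σ g d) (hc : 0 ≤ c) (hd : 0 ≤ d) :
    L2Le σ (fun x => f x + g x) (c + d) := by
  have hfc := hf.1
  have hgc := hg.1
  refine ⟨hf.1.add hg.1, ?_⟩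
  have h := (hf.mul hg hc hd).2
  have hle : ∀ x, (f x + g x) ^ 2 ≤ (f x) ^ 2 + (g x) ^ 2 + 2 * |f x * g x| := fun x => by
    nlinarith [le_abs_self (f x * g x)]
  refine (setIntegral_mono_closedBall (by fun_prop) (by fun_prop) fun x _ => hle x).trans ?_
  rw [integral_add (integrableOn_closedBall (by fun_prop) σ)
    (integrableOn_closedBall (by fun_prop) σ), integral_add
    (integrableOn_closedBall (by fun_prop) σ) (integrableOn_closedBall (by fun_prop) σ),
    integral_const_mul]
  nlinarith [hf.2, hg.2]

theorem L2Le.bdd_mul {a : E3 → ℝ} {A : ℝ} (ha : Continuous a)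
    (hb : ∀ x ∈ closedBall (0 : E3) σ, |a x| ≤ A) (hf : L2Le σ f c) :
    L2Le σ (fun x => a x * f x) (A * c) := by
  have hfc := hf.1
  refine ⟨ha.mul hf.1, ?_⟩
  calc _ ≤ ∫ x in closedBall (0 : E3) σ, A ^ 2 * (f x) ^ 2 := by
        refine setIntegral_mono_closedBall (by fun_prop) (by fun_prop) fun x hx => ?_
        rw [mul_pow]
        exact mul_le_mul_of_nonneg_right (sq_le_sq' (abs_le.1 (hb x hx)).1
          (abs_le.1 (hb x hx)).2) (sq_nonneg _)
    _ = A ^ 2 * ∫ x in closedBall (0 : E3) σ, (f x) ^ 2 := integral_const_mul _ _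
    _ ≤ A ^ 2 * c ^ 2 := mul_le_mul_of_nonneg_left hf.2 (sq_nonneg _)
    _ = _ := by ring

theorem L2Le.mono (hf : L2Le σ f c) (hc : 0 ≤ c) (h : c ≤ d) : L2Le σ f d :=
  ⟨hf.1, hf.2.trans (pow_le_pow_left₀ hc h 2)⟩

theorem L2Le.sum {F : Fin 3 → E3 → ℝ} (hF : ∀ j, L2Le σ (F j) c) (hc : 0 ≤ c) :
    L2Le σ (fun x => ∑ j, F j x) (3 * c) := by
  have h := ((hF 0).add (hF 1) hc hc).add (hF 2) (add_nonneg hc hc) hc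
  simp only [Fin.sum_univ_three]
  rw [show 3 * c = c + c + c by ring]
  exact h

theorem L2Le.neg (hf : L2Le σ f c) : L2Le σ (fun x => -f x) c :=
  ⟨hf.1.neg, by simpa using hf.2⟩

theorem L2Le.sub (hf : L2Le σ f c) (hg : L2Le σ g d) (hc : 0 ≤ c) (hd : 0 ≤ d) :
    L2Le σ (fun x => f x - g x) (c + d) := by
  simpa only [sub_eq_add_neg] using hf.add hg.neg hc hd

end Norms

/-- Bounds for a vector field on a ball: `L²` by `X`, gradient in `L²` by `Z`, `L⁴` by `Q`. -/
structure FieldBounds (X Z Q σ : ℝ) (v : Fin 3 → E3 → ℝ) : Prop where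
  l2 : ∀ j, L2Le σ (v j) X
  grad : ∀ i j, L2Le σ (fun x => pd i (v j) x) Z
  l4 : ∀ j, L2Le σ (fun x => (v j x) ^ 2) Q

section Energy

variable {κ X Z Q σ : ℝ} {u w b v : Fin 3 → E3 → ℝ} {P : E3 → ℝ}

theorem L1Le.mul_mul (hX : 0 ≤ X) (hQ : 0 ≤ Q) {f g h : E3 → ℝ}
    (hf : L2Le σ f X) (hg : L2Le σ (fun x => (g x) ^ 2) Q) (hh : L2Le σ (fun x => (h x) ^ 2) Q)
    (hgc : Continuous g) (hhc : Continuous h) :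
    L1Le σ (fun x => f x * (g x * h x)) (X * Q) := by
  have h1 := ((hf.mul hg hX hQ).const_mul 2⁻¹).1
  have hfc := hf.1
  refine ⟨by fun_prop, ?_⟩
  have h2 := (hf.mul hg hX hQ).2
  have h3 := (hf.mul hh hX hQ).2
  calc _ ≤ ∫ x in closedBall (0 : E3) σ, (2⁻¹ * |f x * (g x) ^ 2| + 2⁻¹ * |f x * (h x) ^ 2|) := by
        refine setIntegral_mono_closedBall (by fun_prop) (by fun_prop) fun x _ => ?_
        have e1 : |(g x) ^ 2| = |g x| ^ 2 := abs_pow _ _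
        have e2 : |(h x) ^ 2| = |h x| ^ 2 := abs_pow _ _
        simp only [abs_mul, e1, e2]
        nlinarith [mul_nonneg (abs_nonneg (f x)) (sq_nonneg (|g x| - |h x|))]
    _ = 2⁻¹ * (∫ x in closedBall (0 : E3) σ, |f x * (g x) ^ 2|)
        + 2⁻¹ * ∫ x in closedBall (0 : E3) σ, |f x * (h x) ^ 2| := by
        rw [integral_add (integrableOn_closedBall (by fun_prop) σ)
          (integrableOn_closedBall (by fun_prop) σ), integral_const_mul, integral_const_mul]
    _ ≤ _ := by linarith

theorem L1Le_energyFlux (hX : 0 ≤ X) (hZ : 0 ≤ Z) (hQ : 0 ≤ Q)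
    (hu : FieldBounds X Z Q σ u) (hw : FieldBounds X Z Q σ w) (hb : FieldBounds X Z Q σ b)
    (hκw : ∀ j, L2Le σ (fun x => κ * w j x) Z) (i : Fin 3) :
    L1Le σ (energyFlux κ u w b i) (16 * (X * Z) + 8 * (X * Q)) := by
  have hT : ∀ v, FieldBounds X Z Q σ v →
      L1Le σ (fun x => ∑ j, v j x * pd i (v j) x) (3 * (X * Z)) := fun v hv =>
    L1Le.sum fun j => (hv.l2 j).mul (hv.grad i j) hX hZ
  have hD : L1Le σ (fun x => w i x * ∑ k, pd k (w k) x) (X * (3 * Z)) :=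
    (hw.l2 i).mul (L2Le.sum (fun k => hw.grad k k) hZ) hX (by positivity)
  have hq : ∀ v, FieldBounds X Z Q σ v →
      L1Le σ (fun x => ∑ j, u i x * (v j x * v j x)) (3 * (X * Q)) := fun v hv =>
    L1Le.sum fun j => L1Le.mul_mul hX hQ (hu.l2 i) (hv.l4 j) (hv.l4 j) (hv.l2 j).1 (hv.l2 j).1
  have hub : L1Le σ (fun x => ∑ j, b i x * (u j x * b j x)) (3 * (X * Q)) :=
    L1Le.sum fun j => L1Le.mul_mul hX hQ (hb.l2 i) (hu.l4 j) (hb.l4 j) (hu.l2 j).1 (hb.l2 j).1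
  have hconv : L1Le σ (fun x => ∑ j, u j x * pd j (u i) x) (3 * (X * Z)) :=
    L1Le.sum fun j => (hu.l2 j).mul (hu.grad j i) hX hZ
  have hcr' : ∀ j k, L1Le σ (fun x => u j x * (κ * w k x) - u k x * (κ * w j x))
      (X * Z + X * Z) := fun j k =>
    ((hu.l2 j).mul (hκw k) hX hZ).sub ((hu.l2 k).mul (hκw j) hX hZ)
  have hcr : L1Le σ (fun x => κ * crossField u w i x) (X * Z + X * Z) := by
    have e : ∀ j k, (fun x => κ * (u j x * w k x - u k x * w j x))
        = fun x => u j x * (κ * w k x) - u k x * (κ * w j x) := by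
      intro j k; funext x; ring
    fin_cases i
    · have := hcr' 1 2
      rw [← e] at this
      exact this
    · have := hcr' 2 0
      rw [← e] at this
      exact this
    · have := hcr' 0 1
      rw [← e] at this
      exact this
  have h := ((((((((hT u hu).neg.sub (hT w hw)).sub (hT b hb)).sub hD).add
    ((((hq u hu).add (hq w hw)).add (hq b hb)).const_mul 2⁻¹)).sub hub).add hcr).add
    (hconv.const_mul (2 / 3)))
  have hcont := h.1
  refine ⟨?_, ?_⟩
  · convert hcont using 2 with x
    simp only [energyFlux, Finset.mul_sum, mul_add]
  · refine le_trans (le_of_eq ?_) (h.2.trans ?_)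
    · congr 1
      funext x
      simp only [energyFlux, Finset.mul_sum, mul_add]
    · rw [abs_of_pos (by norm_num : (0 : ℝ) < 2⁻¹), abs_of_pos (by norm_num : (0 : ℝ) < 2 / 3)]
      nlinarith [mul_nonneg hX hZ, mul_nonneg hX hQ]

theorem IsDilatedSolution.energy_le (hs : IsDilatedSolution κ u w b P) {φ : E3 → ℝ}
    (hφ : SmoothFn φ) (hφ0 : ∀ x, 0 ≤ φ x) (hφs : tsupport φ ⊆ closedBall (0 : E3) σ) :
    ∫ x in closedBall (0 : E3) σ, φ x * (3⁻¹ * gradEnergy u x + gradEnergy w x + gradEnergy b x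
        + 2⁻¹ * ∑ j, (κ * w j x) ^ 2)
      ≤ (∑ i, ∫ x in closedBall (0 : E3) σ, pd i φ x * energyFlux κ u w b i x)
        + ∫ x in closedBall (0 : E3) σ, P x * ∑ i, pd i φ x * u i x := by
  have hu := hs.smooth_u
  have hw := hs.smooth_w
  have hb := hs.smooth_b
  have hP := hs.smooth_P
  have hF := hs.smoothFn_energyFlux
  have huc := fun j => (hu j).continuous
  have hwc := fun j => (hw j).continuous
  have hPc := hP.continuous
  have hφc := hφ.continuous
  have hFc := fun j => (hF j).continuous
  have hup := fun i j => (smoothFn_pd i (hu j)).continuous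
  have hwp := fun i j => (smoothFn_pd i (hw j)).continuous
  have hbp := fun i j => (smoothFn_pd i (hb j)).continuous
  have hφp := fun i => (smoothFn_pd i hφ).continuous
  have hGs : ∀ i, SmoothFn fun y => energyFlux κ u w b i y + u i y * P y := fun i =>
    (hF i).add ((hu i).mul hP)
  have hGp := fun i => (smoothFn_pd i (hGs i)).continuous
  have hφG : ∀ i, SmoothFn fun y => φ y * (energyFlux κ u w b i y + u i y * P y) := fun i =>
    hφ.mul (hGs i)
  have hφGp := fun i => (smoothFn_pd i (hφG i)).continuous
  have hz : ∀ i, ∫ x in closedBall (0 : E3) σ,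
      pd i (fun y => φ y * (energyFlux κ u w b i y + u i y * P y)) x = 0 := by
    intro i
    have hsupp : tsupport (fun y => φ y * (energyFlux κ u w b i y + u i y * P y))
        ⊆ closedBall (0 : E3) σ :=
      (closure_mono (Function.support_mul_subset_left _ _)).trans hφs
    rw [setIntegral_eq_integral_of_forall_compl_eq_zero fun x hx =>
      pd_eq_zero_of_tsupport_subset hsupp hx i]
    exact integral_pd_eq_zero i (hφG i) (hasCompactSupport_of_tsupport_subset hsupp)
  have hpt : ∀ x, φ x * (3⁻¹ * gradEnergy u x + gradEnergy w x + gradEnergy b x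
        + 2⁻¹ * ∑ j, (κ * w j x) ^ 2)
      ≤ ((∑ i, pd i φ x * energyFlux κ u w b i x) + P x * ∑ i, pd i φ x * u i x)
        - ∑ i, pd i (fun y => φ y * (energyFlux κ u w b i y + u i y * P y)) x := by
    intro x
    have h := mul_le_mul_of_nonneg_left (hs.div_flux_le x) (hφ0 x)
    have e : ∀ i, pd i (fun y => φ y * (energyFlux κ u w b i y + u i y * P y)) x
        = pd i φ x * (energyFlux κ u w b i x + u i x * P x)
          + φ x * pd i (fun y => energyFlux κ u w b i y + u i y * P y) x := fun i =>
      pd_mul i hφ (hGs i) x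
    simp_rw [e]
    simp only [Fin.sum_univ_three] at h ⊢
    linarith
  unfold gradEnergy at *
  refine (setIntegral_mono_closedBall (by fun_prop) (by fun_prop) fun x _ => hpt x).trans ?_
  rw [integral_sub (integrableOn_closedBall (by fun_prop) σ)
      (integrableOn_closedBall (by fun_prop) σ),
    integral_add (integrableOn_closedBall (by fun_prop) σ)
      (integrableOn_closedBall (by fun_prop) σ),
    integral_finsetSum _ fun i _ => integrableOn_closedBall (by fun_prop) σ,
    integral_finsetSum _ fun i _ => integrableOn_closedBall (by fun_prop) σ]
  simp [hz]

theorem sum_setIntegral_pd_mul_energyFlux_le {φ : E3 → ℝ} {Φ c : ℝ} (hφ : SmoothFn φ)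
    (hφd : ∀ i x, |pd i φ x| ≤ Φ) (hE : ∀ i, L1Le σ (energyFlux κ u w b i) c) (hΦ : 0 ≤ Φ) :
    ∑ i, ∫ x in closedBall (0 : E3) σ, pd i φ x * energyFlux κ u w b i x ≤ 3 * (Φ * c) := by
  have h : ∀ i, ∫ x in closedBall (0 : E3) σ, pd i φ x * energyFlux κ u w b i x ≤ Φ * c := by
    intro i
    have hFc := (hE i).1
    have hφp := (smoothFn_pd i hφ).continuous
    calc _ ≤ ∫ x in closedBall (0 : E3) σ, Φ * |energyFlux κ u w b i x| := by
          refine setIntegral_mono_closedBall (by fun_prop) (by fun_prop) fun x _ => ?_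
          refine (le_abs_self _).trans ?_
          rw [abs_mul]
          exact mul_le_mul_of_nonneg_right (hφd i x) (abs_nonneg _)
      _ = Φ * ∫ x in closedBall (0 : E3) σ, |energyFlux κ u w b i x| := integral_const_mul _ _
      _ ≤ _ := mul_le_mul_of_nonneg_left (hE i).2 hΦ
  calc _ ≤ ∑ i : Fin 3, Φ * c := Finset.sum_le_sum fun i _ => h i
    _ = _ := by simp

end Energy

/-- The skew-symmetric matrix field whose row divergence is the curl of `w`. -/
def skewField (w : Fin 3 → E3 → ℝ) (j k : Fin 3) (x : E3) : ℝ :=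
  ![![0, -w 2 x, w 1 x], ![w 2 x, 0, -w 0 x], ![-w 1 x, w 0 x, 0]] j k

section Pressure

variable {κ σ : ℝ} {u w b v : Fin 3 → E3 → ℝ} {P : E3 → ℝ}

theorem smoothFn_skewField (hw : ∀ j, SmoothFn (w j)) (j k : Fin 3) :
    SmoothFn (skewField w j k) := by
  unfold skewField
  fin_cases j <;> fin_cases k <;> simp <;> fun_prop

theorem sum_pd_skewField (k : Fin 3) (x : E3) :
    ∑ j, pd j (skewField w j k) x = crl w k x := by
  have h0 : ∀ j k, skewField w j k = fun x =>
    ![![0, -w 2 x, w 1 x], ![w 2 x, 0, -w 0 x], ![-w 1 x, w 0 x, 0]] j k := fun _ _ => rfl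
  have e : ∀ j, (fun x => w j x) = w j := fun _ => rfl
  simp only [Fin.sum_univ_three, h0, crl]
  fin_cases k <;> simp [pd_neg, pd_const, e] <;> ring

theorem L2Le_skewField {Z : ℝ} (hκw : ∀ j, L2Le σ (fun x => κ * w j x) Z) (j k : Fin 3) :
    L2Le σ (fun x => κ * skewField w j k x) Z := by
  have h0 : L2Le σ (fun _ => (0 : ℝ)) Z := ⟨continuous_const, by simp; positivity⟩
  have h1 : ∀ j, L2Le σ (fun x => -(κ * w j x)) Z := fun j => (hκw j).neg
  unfold skewField
  fin_cases j <;> fin_cases k <;> simp [h0, h1, hκw]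

theorem IsDilatedSolution.pd_pressure (hs : IsDilatedSolution κ u w b P) (k : Fin 3) (x : E3) :
    pd k P x = ∑ j, (pd j (fun y => pd j (u k) y + κ * skewField w j k y) x
      + pd j (fun y => b j y * b k y - u j y * u k y) x) := by
  have hu := hs.smooth_u
  have hb := hs.smooth_b
  have hM := smoothFn_skewField hs.smooth_w
  have e : ∀ j, pd j (fun y => pd j (u k) y + κ * skewField w j k y) x
      + pd j (fun y => b j y * b k y - u j y * u k y) x
      = pd j (fun y => pd j (u k) y) x + κ * pd j (skewField w j k) x
        + (pd j (fun y => b j y * b k y) x - pd j (fun y => u j y * u k y) x) := by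
    intro j
    have hMj := hM j k
    rw [pd_add j (by fun_prop) (by fun_prop), pd_const_mul j κ (hM j k),
      pd_sub j (by fun_prop) (by fun_prop)]
  simp_rw [e, Finset.sum_add_distrib, Finset.sum_sub_distrib, ← Finset.mul_sum]
  rw [div_mul_field hb (hb k), div_mul_field hu (hu k), hs.div_u, hs.div_b, sum_pd_skewField,
    hs.eq_u, lap]
  ring

theorem cutoffDiv_tsupport {φ : E3 → ℝ} (hφs : tsupport φ ⊆ closedBall (0 : E3) σ) :
    tsupport (fun x => ∑ i, pd i φ x * u i x) ⊆ closedBall (0 : E3) σ := by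
  refine closure_minimal (fun x hx => ?_) isClosed_closedBall
  by_contra h
  exact hx (by simp [pd_eq_zero_of_tsupport_subset hφs h])

theorem cutoffDiv_integral {φ : E3 → ℝ} (hφ : SmoothFn φ) (hu : ∀ j, SmoothFn (u j))
    (hdiv : ∀ x, ∑ i, pd i (u i) x = 0) (hφs : tsupport φ ⊆ closedBall (0 : E3) σ) :
    ∫ x in closedBall (0 : E3) σ, ∑ i, pd i φ x * u i x = 0 := by
  have e : ∀ x, ∑ i, pd i φ x * u i x = ∑ i, pd i (fun y => u i y * φ y) x := by
    intro x
    rw [div_mul_field hu hφ, hdiv, zero_mul, zero_add]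
    exact Finset.sum_congr rfl fun i _ => mul_comm _ _
  have hφu : ∀ i, SmoothFn fun y => u i y * φ y := fun i => (hu i).mul hφ
  have hp := fun i => (smoothFn_pd i (hφu i)).continuous
  have hsupp : ∀ i, tsupport (fun y => u i y * φ y) ⊆ closedBall (0 : E3) σ := fun i =>
    (closure_mono (Function.support_mul_subset_right _ _)).trans hφs
  simp_rw [e]
  rw [integral_finsetSum _ fun i _ => integrableOn_closedBall (by fun_prop) σ]
  refine Finset.sum_eq_zero fun i _ => ?_
  rw [setIntegral_eq_integral_of_forall_compl_eq_zero fun x hx =>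
    pd_eq_zero_of_tsupport_subset (hsupp i) hx i]
  exact integral_pd_eq_zero i (hφu i) (hasCompactSupport_of_tsupport_subset (hsupp i))

theorem L2Le_cutoffDiv {φ : E3 → ℝ} {c K X Z Q : ℝ} (hφ : SmoothFn φ)
    (hc : 0 ≤ c) (hK : 0 ≤ K) (hX : 0 ≤ X)
    (hφd : ∀ i x, |pd i φ x| ≤ c * K) (hu : FieldBounds X Z Q σ u) :
    L2Le σ (fun x => ∑ i, pd i φ x * u i x) (3 * (c * K * X)) :=
  L2Le.sum (fun i => (hu.l2 i).bdd_mul (smoothFn_pd i hφ).continuous fun x _ => hφd i x)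
    (by positivity)

theorem L2Le_pd_cutoffDiv {φ : E3 → ℝ} {c K X Z Q : ℝ} (hφ : SmoothFn φ)
    (hus : ∀ j, SmoothFn (u j))
    (hc : 0 ≤ c) (hK : 1 ≤ K) (hX : 0 ≤ X) (hZ : 0 ≤ Z) (hXZ : K * X ≤ Z) (hσ2 : σ ≤ 2)
    (hφd : ∀ i x, |pd i φ x| ≤ c * K)
    (hφdd : ∀ i j x, |pd i (fun y => pd j φ y) x| ≤ c * K ^ 2) (hu : FieldBounds X Z Q σ u)
    (j k : Fin 3) {a : E3} (ha : a ∈ closedBall (0 : E3) 1) :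
    L2Le σ (fun x => pd j (fun y => (∑ i, pd i φ y * u i y) * (y k - a k)) x)
      (21 * c * (K * Z)) := by
  have hK0 : 0 ≤ K := by linarith
  have hg : SmoothFn fun y => ∑ i, pd i φ y * u i y := by fun_prop
  have e1 : ∀ x, pd j (fun y => (∑ i, pd i φ y * u i y) * (y k - a k)) x
      = (x k - a k) * (∑ i, (pd j (fun y => pd i φ y) x * u i x + pd i φ x * pd j (u i) x))
        + (if j = k then 1 else 0) * ∑ i, pd i φ x * u i x := by
    intro x
    rw [pd_mul j hg (by fun_prop), pd_sub j (by fun_prop) (by fun_prop), pd_coord, pd_const,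
      pd_sum_mul j (fun i => smoothFn_pd i hφ) hus]
    ring
  simp_rw [e1]
  have h1 : ∀ i, L2Le σ (fun x => pd j (fun y => pd i φ y) x * u i x + pd i φ x * pd j (u i) x)
      (c * K ^ 2 * X + c * K * Z) := fun i =>
    ((hu.l2 i).bdd_mul (smoothFn_pd j (smoothFn_pd i hφ)).continuous fun x _ => hφdd j i x).add
      ((hu.grad j i).bdd_mul (smoothFn_pd i hφ).continuous fun x _ => hφd i x)
      (by positivity) (by positivity)
  have hb : ∀ x ∈ closedBall (0 : E3) σ, |x k - a k| ≤ 3 := by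
    intro x hx
    have hx1 := abs_le.1 ((abs_coord_le_norm x k).trans ((mem_closedBall_zero_iff.1 hx).trans hσ2))
    have ha1 := abs_le.1 ((abs_coord_le_norm a k).trans (mem_closedBall_zero_iff.1 ha))
    rw [abs_le]
    constructor <;> linarith [hx1.1, hx1.2, ha1.1, ha1.2]
  have h2 := (L2Le.sum h1 (by positivity)).bdd_mul (a := fun x => x k - a k) (A := 3)
    (by fun_prop) hb
  have h3 := (L2Le_cutoffDiv hφ hc hK0 hX hφd hu).bdd_mul
    (a := fun _ => if j = k then (1 : ℝ) else 0) (A := 1) continuous_const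
    (fun x _ => by split_ifs <;> simp)
  refine (h2.add h3 (by positivity) (by positivity)).mono (by positivity) ?_
  have h4 : c * K ^ 2 * X ≤ c * K * Z := by
    calc c * K ^ 2 * X = c * K * (K * X) := by ring
      _ ≤ _ := by gcongr
  have h5 : c * K * X ≤ c * K * Z := by
    calc c * K * X = c * (K * X) := by ring
      _ ≤ c * Z := by gcongr
      _ ≤ c * K * Z := by
        have : c * 1 * Z ≤ c * K * Z := by gcongr
        linarith
  linarith

end Pressure

theorem exists_pressure_bound : ∃ C₀ : ℝ, 0 ≤ C₀ ∧ ∀ {κ σ : ℝ} {u w b : Fin 3 → E3 → ℝ}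
    {P φ : E3 → ℝ} {c K ξ ζ Q δ : ℝ}, IsDilatedSolution κ u w b P → 1 ≤ σ → σ ≤ 2 →
    SmoothFn φ → tsupport φ ⊆ closedBall (0 : E3) σ → 0 < c → 1 ≤ K → 0 < ξ → 0 < ζ → 0 < Q →
    0 < δ → δ ≤ 1 / 2 → K * ξ ^ 2 ≤ ζ ^ 2 →
    (∀ i x, |pd i φ x| ≤ c * K) → (∀ i j x, |pd i (fun y => pd j φ y) x| ≤ c * K ^ 2) →
    FieldBounds (ξ ^ 2) (ζ ^ 2) Q σ u → FieldBounds (ξ ^ 2) (ζ ^ 2) Q σ b →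
    (∀ j, L2Le σ (fun x => κ * w j x) (ζ ^ 2)) →
    ∫ x in closedBall (0 : E3) σ, P x * ∑ i, pd i φ x * u i x
      ≤ C₀ * c * (K ^ 4 * ξ ^ 2 * ζ ^ 2 / δ ^ 3 + δ ^ 2 * ζ ^ 4 + K * ξ ^ 3 * ζ ^ 3
        + K * ξ ^ 2 * Q) := by
  obtain ⟨ρ, L, hL, hρ, hρ0, hρ1, hρs, hρL⟩ := exists_averaging_weight
  have hV := volBallTwo_nonneg
  set V := volBallTwo
  set T := 9 + L * (1 / 2 + 4 * V) with hT
  have hT0 : 0 ≤ T := by positivity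
  refine ⟨3024 * T * (V + 1), by positivity, ?_⟩
  intro κ σ u w b P φ c K ξ ζ Q δ hs hσ hσ2 hφ hφs hc hK hξ hζ hQ hδ hδ2 hXZ hφd hφdd hu hb hκw
  have hK0 : 0 < K := by linarith
  have hus := hs.smooth_u
  have hbs := hs.smooth_b
  have hM := smoothFn_skewField hs.smooth_w
  have hg : SmoothFn fun x => ∑ i, pd i φ x * u i x := by fun_prop
  have hA : ∀ j k, SmoothFn fun y => pd j (u k) y + κ * skewField w j k y := by
    intro j k
    have := hM j k
    fun_prop
  have hB : ∀ j k, SmoothFn fun y => b j y * b k y - u j y * u k y := by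
    intro j k
    fun_prop
  rw [setIntegral_mul_eq_sum_segmentPairing hρ hρ1 hg (cutoffDiv_integral hφ hus hs.div_u hφs)
    hs.smooth_P hA hB hs.pd_pressure]
  have hG : 0 < 21 * c * (K * ξ ^ 2) := by positivity
  have hD : 0 < 21 * c * (K * ζ ^ 2) := by positivity
  have hGb := ((L2Le_cutoffDiv hφ hc.le hK0.le (by positivity) hφd hu).mono (by positivity)
    (show _ ≤ 21 * c * (K * ξ ^ 2) by
      have : 0 ≤ c * (K * ξ ^ 2) := by positivity
      linarith)).2
  have hDb := fun (j k : Fin 3) (a : E3) (ha : a ∈ closedBall (0 : E3) 1) =>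
    (L2Le_pd_cutoffDiv hφ hus hc.le hK (by positivity) (by positivity) hXZ hσ2 hφd hφdd hu j k ha).2
  have hone : L2Le σ (fun _ => (1 : ℝ)) (V + 1) := by
    refine ⟨continuous_const, ?_⟩
    have h1 := volume_closedBall_le_volBallTwo hσ2
    simp only [one_pow, setIntegral_const, smul_eq_mul, mul_one]
    nlinarith
  have hA2 : ∀ j k, L2Le σ (fun y => pd j (u k) y + κ * skewField w j k y) (2 * ζ ^ 2) := by
    intro j k
    have h := (hu.grad j k).add (L2Le_skewField hκw j k) (by positivity) (by positivity)
    rwa [← two_mul] at h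
  have hA1 : ∀ j k, ∫ x in closedBall (0 : E3) σ, |pd j (u k) x + κ * skewField w j k x|
      ≤ 2 * ζ ^ 2 * (V + 1) := by
    intro j k
    simpa using ((hA2 j k).mul hone (by positivity) (by positivity)).2
  have hB2 : ∀ j k, L2Le σ (fun y => b j y * b k y - u j y * u k y) (2 * Q) := by
    intro j k
    have hm : ∀ v, FieldBounds (ξ ^ 2) (ζ ^ 2) Q σ v → L2Le σ (fun y => v j y * v k y) Q := by
      intro v hv
      have h1 := (hv.l4 j).mul (hv.l4 k) hQ.le hQ.le
      refine ⟨(hv.l2 j).1.mul (hv.l2 k).1, le_trans (le_of_eq ?_) (h1.2.trans_eq (sq Q).symm)⟩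
      congr 1
      funext x
      rw [mul_pow, abs_of_nonneg (by positivity)]
    have h := (hm b hb).sub (hm u hu) hQ.le hQ.le
    rwa [← two_mul] at h
  have hB1 : ∀ j k, ∫ x in closedBall (0 : E3) σ, |b j x * b k x - u j x * u k x|
      ≤ 2 * ξ ^ 4 := by
    intro j k
    refine (((hb.l2 j).mul (hb.l2 k) (by positivity) (by positivity)).sub
      ((hu.l2 j).mul (hu.l2 k) (by positivity) (by positivity))).2.trans_eq ?_
    ring
  have bA : ∀ j k, |∫ t in (0 : ℝ)..1, segmentPairing ρ (fun x => ∑ i, pd i φ x * u i x)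
      (fun y => pd j (u k) y + κ * skewField w j k y) σ j k t|
      ≤ T * (42 * (V + 1) * c * (K ^ 4 * ξ ^ 2 * ζ ^ 2 / δ ^ 3) + 42 * c * (δ ^ 2 * ζ ^ 4)) := by
    intro j k
    refine (abs_integral_segmentPairing_le (q := δ / K) hL hρ hρ0 hρ1 hρs hρL hσ hσ2 hg
      (cutoffDiv_tsupport hφs) (hA j k) hG hD (by positivity) hGb (hA1 j k) (hDb j k) (hA2 j k).2
      (by positivity) ?_).trans ?_
    · have : δ / K ≤ 1 / 2 := by
        rw [div_le_iff₀ hK0]; nlinarith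
      have h0 : 0 ≤ δ / K := by positivity
      nlinarith
    · refine mul_le_mul_of_nonneg_left (add_le_add (le_of_eq ?_) ?_) hT0
      · field_simp; ring
      · have e : (δ / K) ^ 2 * (21 * c * (K * ζ ^ 2) * (2 * ζ ^ 2))
            = 42 * c * (δ ^ 2 * ζ ^ 4) / K := by field_simp; ring
        rw [e]
        exact div_le_self (by positivity) hK
  have bB : ∀ j k, |∫ t in (0 : ℝ)..1, segmentPairing ρ (fun x => ∑ i, pd i φ x * u i x)
      (fun y => b j y * b k y - u j y * u k y) σ j k t|
      ≤ T * (336 * c * (K * ξ ^ 3 * ζ ^ 3) + 21 / 2 * c * (K * ξ ^ 2 * Q)) := by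
    intro j k
    refine (abs_integral_segmentPairing_le (q := ξ / (2 * ζ)) hL hρ hρ0 hρ1 hρs hρL hσ hσ2 hg
      (cutoffDiv_tsupport hφs) (hB j k) hG hD (by positivity) hGb (hB1 j k) (hDb j k) (hB2 j k).2
      (by positivity) ?_).trans ?_
    · have : ξ ^ 2 ≤ ζ ^ 2 := by nlinarith [sq_nonneg ξ]
      rw [div_pow, div_le_iff₀ (by positivity)]
      nlinarith
    · refine mul_le_mul_of_nonneg_left (add_le_add (le_of_eq ?_) (le_of_eq ?_)) hT0
      · field_simp; ring
      · field_simp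
  calc _ ≤ ∑ k : Fin 3, ∑ j : Fin 3,
        (T * (42 * (V + 1) * c * (K ^ 4 * ξ ^ 2 * ζ ^ 2 / δ ^ 3) + 42 * c * (δ ^ 2 * ζ ^ 4))
        + T * (336 * c * (K * ξ ^ 3 * ζ ^ 3) + 21 / 2 * c * (K * ξ ^ 2 * Q))) := by
        gcongr with k _ j _
        · exact (le_abs_self _).trans (bA j k)
        · exact (le_abs_self _).trans (bB j k)
    _ = T * c * (378 * (V + 1) * (K ^ 4 * ξ ^ 2 * ζ ^ 2 / δ ^ 3) + 378 * (δ ^ 2 * ζ ^ 4)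
        + 3024 * (K * ξ ^ 3 * ζ ^ 3) + 189 / 2 * (K * ξ ^ 2 * Q)) := by
        simp only [Finset.sum_const, Finset.card_univ, Fintype.card_fin, nsmul_eq_mul]
        push_cast
        ring
    _ ≤ T * c * (3024 * (V + 1) * (K ^ 4 * ξ ^ 2 * ζ ^ 2 / δ ^ 3 + δ ^ 2 * ζ ^ 4
        + K * ξ ^ 3 * ζ ^ 3 + K * ξ ^ 2 * Q)) := by
        refine mul_le_mul_of_nonneg_left ?_ (by positivity)
        have t1 : 0 ≤ K ^ 4 * ξ ^ 2 * ζ ^ 2 / δ ^ 3 := by positivity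
        have t2 : 0 ≤ δ ^ 2 * ζ ^ 4 := by positivity
        have t3 : 0 ≤ K * ξ ^ 3 * ζ ^ 3 := by positivity
        have t4 : 0 ≤ K * ξ ^ 2 * Q := by positivity
        nlinarith [mul_nonneg hV t1, mul_nonneg hV t2, mul_nonneg hV t3, mul_nonneg hV t4]
    _ = _ := by ring

/-- The energy density `|∇u|² + |∇w|² + |∇b|² + κ²|w|²`. -/
def energyDensity (κ : ℝ) (u w b : Fin 3 → E3 → ℝ) (x : E3) : ℝ :=
  gradEnergy u x + gradEnergy w x + gradEnergy b x + ∑ j, (κ * w j x) ^ 2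

theorem gradEnergy_nonneg (v : Fin 3 → E3 → ℝ) (x : E3) : 0 ≤ gradEnergy v x :=
  Finset.sum_nonneg fun _ _ => Finset.sum_nonneg fun _ _ => sq_nonneg _

theorem sq_pd_le_gradEnergy (v : Fin 3 → E3 → ℝ) (i j : Fin 3) (x : E3) :
    (pd i (v j) x) ^ 2 ≤ gradEnergy v x := by
  refine le_trans ?_ (Finset.single_le_sum (f := fun i => ∑ j, (pd i (v j) x) ^ 2)
    (fun _ _ => Finset.sum_nonneg fun _ _ => sq_nonneg _) (Finset.mem_univ i))
  exact Finset.single_le_sum (f := fun j => (pd i (v j) x) ^ 2) (fun _ _ => sq_nonneg _)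
    (Finset.mem_univ j)

theorem continuous_gradEnergy {v : Fin 3 → E3 → ℝ} (hv : ∀ j, SmoothFn (v j)) :
    Continuous (gradEnergy v) := by
  have := fun i j => (smoothFn_pd i (hv j)).continuous
  unfold gradEnergy
  fun_prop

section OneStep

variable {κ : ℝ} {u w b : Fin 3 → E3 → ℝ} {P : E3 → ℝ}

theorem IsDilatedSolution.continuous_energyDensity (hs : IsDilatedSolution κ u w b P) :
    Continuous (energyDensity κ u w b) := by
  have h1 := continuous_gradEnergy hs.smooth_u
  have h2 := continuous_gradEnergy hs.smooth_w
  have h3 := continuous_gradEnergy hs.smooth_b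
  have h4 := fun j => (hs.smooth_w j).continuous
  unfold energyDensity
  fun_prop

theorem sum_sq_nonneg' (w : Fin 3 → E3 → ℝ) (x : E3) : 0 ≤ ∑ j, (κ * w j x) ^ 2 :=
  Finset.sum_nonneg fun _ _ => sq_nonneg _

theorem energyDensity_nonneg (x : E3) : 0 ≤ energyDensity κ u w b x := by
  have := gradEnergy_nonneg u x
  have := gradEnergy_nonneg w x
  have := gradEnergy_nonneg b x
  have := sum_sq_nonneg' (κ := κ) w x
  unfold energyDensity
  positivity

theorem mul_cube_le_young {a ζ ε : ℝ} (ha : 0 ≤ a) (hζ : 0 ≤ ζ) (hε : 0 < ε) :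
    a * ζ ^ 3 ≤ ε * ζ ^ 4 + a ^ 4 / ε ^ 3 := by
  rcases le_total a (ε * ζ) with h | h
  · have h1 : a * ζ ^ 3 ≤ ε * ζ * ζ ^ 3 := by gcongr
    have h2 : 0 ≤ a ^ 4 / ε ^ 3 := by positivity
    linarith [show ε * ζ * ζ ^ 3 = ε * ζ ^ 4 by ring]
  · have h0 : ζ ≤ a / ε := by rw [le_div_iff₀ hε]; linarith
    have h1 : a * ζ ^ 3 ≤ a * (a / ε) ^ 3 := by gcongr
    have h2 : 0 ≤ ε * ζ ^ 4 := by positivity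
    have h3 : a * (a / ε) ^ 3 = a ^ 4 / ε ^ 3 := by field_simp
    linarith

theorem absorb_errors {M A δ K ξ ζ E F : ℝ} (hM : 0 ≤ M) (hδ : 0 < δ) (hK : 1 ≤ K)
    (hξ : 0 < ξ) (hζ : 0 < ζ) (hAδ : A * δ ^ 2 ≤ 1 / 36)
    (hE : ζ ^ 4 ≤ 2 * E + 2 * K ^ 2 * ξ ^ 4)
    (hF : F ≤ 3 * (M * (K ^ 4 * ξ ^ 2 * ζ ^ 2 / δ ^ 3 + K * ξ ^ 3 * ζ ^ 3) + A * (δ ^ 2 * ζ ^ 4))) :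
    F ≤ 2⁻¹ * E + (1 + 27 * M ^ 2 / δ ^ 6 + 139968 * M ^ 4) * K ^ 8 * (ξ ^ 4 + ξ ^ 12) := by
  have h1 : 3 * M * (K ^ 4 * ξ ^ 2 * ζ ^ 2 / δ ^ 3)
      ≤ 1 / 12 * ζ ^ 4 + 27 * M ^ 2 / δ ^ 6 * K ^ 8 * ξ ^ 4 := by
    have e1 : 3 * M * (K ^ 4 * ξ ^ 2 * ζ ^ 2 / δ ^ 3) = (3 * M * K ^ 4 * ξ ^ 2 / δ ^ 3) * ζ ^ 2 := by
      ring
    have e2 : 27 * M ^ 2 / δ ^ 6 * K ^ 8 * ξ ^ 4 = 3 * (3 * M * K ^ 4 * ξ ^ 2 / δ ^ 3) ^ 2 := by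
      field_simp
      ring
    rw [e1, e2]
    nlinarith [sq_nonneg (6 * (3 * M * K ^ 4 * ξ ^ 2 / δ ^ 3) - ζ ^ 2)]
  have h2 : 3 * M * (K * ξ ^ 3 * ζ ^ 3) ≤ 1 / 12 * ζ ^ 4 + 139968 * M ^ 4 * K ^ 4 * ξ ^ 12 := by
    have h := mul_cube_le_young (a := 3 * M * K * ξ ^ 3) (ε := 1 / 12) (by positivity) hζ.le
      (by norm_num)
    have e2 : (3 * M * K * ξ ^ 3) ^ 4 / (1 / 12 : ℝ) ^ 3 = 139968 * M ^ 4 * K ^ 4 * ξ ^ 12 := by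
      ring
    rw [e2] at h
    linarith
  have h3 : 3 * (A * (δ ^ 2 * ζ ^ 4)) ≤ 1 / 12 * ζ ^ 4 := by
    have : A * δ ^ 2 * ζ ^ 4 ≤ 1 / 36 * ζ ^ 4 := by gcongr
    linarith
  have hK2 : K ^ 2 ≤ K ^ 8 := pow_le_pow_right₀ hK (by norm_num)
  have hK4 : K ^ 4 ≤ K ^ 8 := pow_le_pow_right₀ hK (by norm_num)
  have h4 : 2⁻¹ * (K ^ 2 * ξ ^ 4) ≤ K ^ 8 * ξ ^ 4 := by
    have : K ^ 2 * ξ ^ 4 ≤ K ^ 8 * ξ ^ 4 := by gcongr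
    have : 0 ≤ K ^ 2 * ξ ^ 4 := by positivity
    linarith
  have h5 : 139968 * M ^ 4 * K ^ 4 * ξ ^ 12 ≤ 139968 * M ^ 4 * K ^ 8 * ξ ^ 12 := by gcongr
  have p1 : 0 ≤ K ^ 8 * ξ ^ 12 := by positivity
  have p2 : 0 ≤ 27 * M ^ 2 / δ ^ 6 * K ^ 8 * ξ ^ 12 := by positivity
  have p3 : 0 ≤ 139968 * M ^ 4 * K ^ 8 * ξ ^ 4 := by positivity
  linarith

theorem fieldBounds_of_energy {v : Fin 3 → E3 → ℝ} (hv : ∀ j, SmoothFn (v j)) {S X Z Q σ s : ℝ}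
    (hQ : S * (X * Z ^ 3) ≤ Q ^ 2) (hσs : σ ≤ s)
    (hsob : ∀ j, ∫ x in closedBall (0 : E3) σ, (v j x) ^ 4 ≤ S * (X * Z ^ 3))
    (hX : ∀ j, ∫ x in closedBall (0 : E3) s, (v j x) ^ 2 ≤ X ^ 2)
    (hZ : ∀ i j, ∫ x in closedBall (0 : E3) s, (pd i (v j) x) ^ 2 ≤ Z ^ 2) :
    FieldBounds X Z Q σ v := by
  have hvc := fun j => (hv j).continuous
  have hvp := fun i j => (smoothFn_pd i (hv j)).continuous
  have hmono : ∀ f : E3 → ℝ, Continuous f → ∫ x in closedBall (0 : E3) σ, (f x) ^ 2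
      ≤ ∫ x in closedBall (0 : E3) s, (f x) ^ 2 := fun f hf =>
    setIntegral_mono_set (integrableOn_closedBall (by fun_prop) s)
      (Eventually.of_forall fun x => sq_nonneg _)
      (closedBall_subset_closedBall hσs).eventuallyLE
  refine ⟨fun j => ⟨hvc j, (hmono _ (hvc j)).trans (hX j)⟩,
    fun i j => ⟨hvp i j, (hmono _ (hvp i j)).trans (hZ i j)⟩, fun j => ⟨by fun_prop, ?_⟩⟩
  refine le_trans (le_of_eq ?_) ((hsob j).trans hQ)
  simp_rw [← pow_mul]

theorem IsDilatedSolution.integral_energyDensity_le (hs : IsDilatedSolution κ u w b P) {r σ : ℝ}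
    {φ : E3 → ℝ} (hφ : SmoothFn φ) (hφ0 : ∀ x, 0 ≤ φ x)
    (hφr : ∀ x ∈ closedBall (0 : E3) r, φ x = 1) (hrσ : r ≤ σ) :
    ∫ x in closedBall (0 : E3) r, energyDensity κ u w b x ≤
      3 * ∫ x in closedBall (0 : E3) σ, φ x * (3⁻¹ * gradEnergy u x + gradEnergy w x
        + gradEnergy b x + 2⁻¹ * ∑ j, (κ * w j x) ^ 2) := by
  have h1 := continuous_gradEnergy hs.smooth_u
  have h2 := continuous_gradEnergy hs.smooth_w
  have h3 := continuous_gradEnergy hs.smooth_b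
  have h4 := fun j => (hs.smooth_w j).continuous
  have h5 := hφ.continuous
  have hdc := hs.continuous_energyDensity
  rw [← integral_const_mul]
  refine le_trans (setIntegral_mono_closedBall (g := fun x => 3 * (φ x * (3⁻¹ * gradEnergy u x
    + gradEnergy w x + gradEnergy b x + 2⁻¹ * ∑ j, (κ * w j x) ^ 2))) hdc (by fun_prop)
    fun x hx => ?_) (setIntegral_mono_set (integrableOn_closedBall (by fun_prop) σ)
      (Eventually.of_forall fun x => ?_) (closedBall_subset_closedBall hrσ).eventuallyLE)
  all_goals
    have g1 := gradEnergy_nonneg u x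
    have g2 := gradEnergy_nonneg w x
    have g3 := gradEnergy_nonneg b x
    have g4 := sum_sq_nonneg' (κ := κ) w x
  · rw [hφr x hx]
    unfold energyDensity
    linarith
  · have := hφ0 x
    simp only [Pi.zero_apply]
    positivity

theorem flux_merge {c C₀ S K ξ ζ δ T : ℝ} (hc : 0 ≤ c) (hA : 0 ≤ C₀ * c) (hS : 0 ≤ S)
    (hT : 0 ≤ T) (hcube : 0 ≤ K * ξ ^ 3 * ζ ^ 3) (hmerge : K * ξ ^ 2 * ζ ^ 2 ≤ T) :
    3 * (c * K * (16 * (ξ ^ 2 * ζ ^ 2) + 8 * (ξ ^ 2 * ((S + 1) * (ξ * ζ ^ 3)))))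
      + C₀ * c * (T + δ ^ 2 * ζ ^ 4 + K * ξ ^ 3 * ζ ^ 3 + K * ξ ^ 2 * ((S + 1) * (ξ * ζ ^ 3))) ≤
    (48 * c + 24 * c * (S + 1) + C₀ * c * (S + 2)) * (T + K * ξ ^ 3 * ζ ^ 3)
      + C₀ * c * (δ ^ 2 * ζ ^ 4) := by
  set V := K * ξ ^ 3 * ζ ^ 3 with hV
  have e : 3 * (c * K * (16 * (ξ ^ 2 * ζ ^ 2) + 8 * (ξ ^ 2 * ((S + 1) * (ξ * ζ ^ 3)))))
      + C₀ * c * (T + δ ^ 2 * ζ ^ 4 + V + K * ξ ^ 2 * ((S + 1) * (ξ * ζ ^ 3)))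
      = 48 * c * (K * ξ ^ 2 * ζ ^ 2) + 24 * c * (S + 1) * V
        + C₀ * c * (T + (S + 2) * V) + C₀ * c * (δ ^ 2 * ζ ^ 4) := by
    rw [hV]
    ring
  rw [e]
  have h1 : 48 * c * (K * ξ ^ 2 * ζ ^ 2) ≤ 48 * c * T := by gcongr
  have h2 : 0 ≤ 48 * c * V := by positivity
  have h3 : 0 ≤ 24 * c * (S + 1) * T := by positivity
  have h4 : 0 ≤ C₀ * c * ((S + 1) * T) := mul_nonneg hA (by positivity)
  linarith

set_option maxHeartbeats 1000000 in
theorem exists_oneStep : ∃ C : ℝ, 0 ≤ C ∧ ∀ {κ : ℝ} {u w b : Fin 3 → E3 → ℝ} {P : E3 → ℝ} {X r s : ℝ},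
    IsDilatedSolution κ u w b P → 0 < X → 1 ≤ r → r < s → s ≤ 2 →
    (∀ j, ∫ x in closedBall (0 : E3) s, (u j x) ^ 2 ≤ X ^ 2) →
    (∀ j, ∫ x in closedBall (0 : E3) s, (w j x) ^ 2 ≤ X ^ 2) →
    (∀ j, ∫ x in closedBall (0 : E3) s, (b j x) ^ 2 ≤ X ^ 2) →
    ∫ x in closedBall (0 : E3) r, energyDensity κ u w b x
      ≤ 2⁻¹ * (∫ x in closedBall (0 : E3) s, energyDensity κ u w b x)
        + C / (s - r) ^ 8 * (X ^ 2 + X ^ 6) := by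
  obtain ⟨c, hc1, hcut⟩ := exists_cutoff
  obtain ⟨S, hS0, hS⟩ := exists_localSobolev
  obtain ⟨C₀, hC₀, hpr⟩ := exists_pressure_bound
  have hc : 0 < c := by linarith
  set A := C₀ * c with hA
  have hA0 : 0 ≤ A := by positivity
  set M := 48 * c + 24 * c * (S + 1) + A * (S + 2) with hM
  have hM0 : 0 ≤ M := by positivity
  set δ := 1 / (2 + 36 * A) with hδ
  have hδ0 : 0 < δ := by positivity
  have hδ2 : δ ≤ 1 / 2 := one_div_le_one_div_of_le two_pos (by linarith)
  have hAδ : A * δ ^ 2 ≤ 1 / 36 := by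
    have h1 : δ * (2 + 36 * A) = 1 := by rw [hδ]; field_simp
    nlinarith [mul_nonneg hA0 hδ0.le]
  refine ⟨(1 + 27 * M ^ 2 / δ ^ 6 + 139968 * M ^ 4) * 256, by positivity, ?_⟩
  intro κ u w b P X r s hs hX hr hrs hs2 hu2 hw2 hb2
  have hu := hs.smooth_u
  have hw := hs.smooth_w
  have hb := hs.smooth_b
  have hdc := hs.continuous_energyDensity
  set σ := (r + s) / 2 with hσ
  set K := 2 / (s - r) with hK
  have hd0 : 0 < s - r := by linarith
  have hK1 : 1 ≤ K := by rw [hK, le_div_iff₀ hd0]; linarith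
  have hK0 : 0 < K := by linarith
  set E := ∫ x in closedBall (0 : E3) s, energyDensity κ u w b x with hE
  have hE0 : 0 ≤ E := integral_nonneg fun x => energyDensity_nonneg x
  set Z := √E + K * X with hZdef
  have hKX : K * X ≤ Z := by rw [hZdef]; linarith [Real.sqrt_nonneg E]
  have hZ : 0 < Z := lt_of_lt_of_le (by positivity) hKX
  have hEZ : E ≤ Z ^ 2 := by
    rw [hZdef]
    nlinarith [Real.sq_sqrt hE0, mul_nonneg (Real.sqrt_nonneg E) (mul_pos hK0 hX).le,
      sq_nonneg (K * X)]
  have hZE : Z ^ 2 ≤ 2 * E + 2 * K ^ 2 * X ^ 2 := by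
    rw [hZdef]
    nlinarith [Real.sq_sqrt hE0, sq_nonneg (√E - K * X)]
  obtain ⟨ξ, hξ, rfl⟩ : ∃ ξ : ℝ, 0 < ξ ∧ X = ξ ^ 2 := ⟨√X, Real.sqrt_pos.2 hX, (Real.sq_sqrt hX.le).symm⟩
  obtain ⟨ζ, hζ, hζZ⟩ : ∃ ζ : ℝ, 0 < ζ ∧ Z = ζ ^ 2 := ⟨√Z, Real.sqrt_pos.2 hZ, (Real.sq_sqrt hZ.le).symm⟩
  clear_value Z
  subst hζZ
  have hsσ : s - σ = (s - r) / 2 := by rw [hσ]; ring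
  have hσr : σ - r = (s - r) / 2 := by rw [hσ]; ring
  have hdE : ∀ f : E3 → ℝ, Continuous f → (∀ x, (f x) ^ 2 ≤ energyDensity κ u w b x) →
      ∫ x in closedBall (0 : E3) s, (f x) ^ 2 ≤ (ζ ^ 2) ^ 2 := fun f hf h =>
    (setIntegral_mono_closedBall (by fun_prop) hdc fun x _ => h x).trans hEZ
  have hZu : ∀ i j, ∫ x in closedBall (0 : E3) s, (pd i (u j) x) ^ 2 ≤ (ζ ^ 2) ^ 2 := fun i j =>
    hdE _ (smoothFn_pd i (hu j)).continuous fun x => by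
      have := sq_pd_le_gradEnergy u i j x
      have := gradEnergy_nonneg w x
      have := gradEnergy_nonneg b x
      have := sum_sq_nonneg' (κ := κ) w x
      unfold energyDensity
      linarith
  have hZw : ∀ i j, ∫ x in closedBall (0 : E3) s, (pd i (w j) x) ^ 2 ≤ (ζ ^ 2) ^ 2 := fun i j =>
    hdE _ (smoothFn_pd i (hw j)).continuous fun x => by
      have := sq_pd_le_gradEnergy w i j x
      have := gradEnergy_nonneg u x
      have := gradEnergy_nonneg b x
      have := sum_sq_nonneg' (κ := κ) w x
      unfold energyDensity
      linarith
  have hZb : ∀ i j, ∫ x in closedBall (0 : E3) s, (pd i (b j) x) ^ 2 ≤ (ζ ^ 2) ^ 2 := fun i j =>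
    hdE _ (smoothFn_pd i (hb j)).continuous fun x => by
      have := sq_pd_le_gradEnergy b i j x
      have := gradEnergy_nonneg u x
      have := gradEnergy_nonneg w x
      have := sum_sq_nonneg' (κ := κ) w x
      unfold energyDensity
      linarith
  set Q := (S + 1) * (ξ * ζ ^ 3) with hQ
  have hQ0 : 0 < Q := by positivity
  have hSQ : S * (ξ ^ 2 * (ζ ^ 2) ^ 3) ≤ Q ^ 2 := by
    have e : Q ^ 2 = (S + 1) ^ 2 * (ξ ^ 2 * (ζ ^ 2) ^ 3) := by rw [hQ]; ring
    rw [e]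
    gcongr
    nlinarith
  have hXσ : ξ ^ 2 / (s - σ) ≤ ζ ^ 2 := by
    refine le_trans (le_of_eq ?_) hKX
    rw [hsσ, hK]
    field_simp
  have hsob : ∀ v : Fin 3 → E3 → ℝ, (∀ j, SmoothFn (v j)) →
      (∀ j, ∫ x in closedBall (0 : E3) s, (v j x) ^ 2 ≤ (ξ ^ 2) ^ 2) →
      (∀ i j, ∫ x in closedBall (0 : E3) s, (pd i (v j) x) ^ 2 ≤ (ζ ^ 2) ^ 2) →
      FieldBounds (ξ ^ 2) (ζ ^ 2) Q σ v := fun v hv h2 hp =>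
    fieldBounds_of_energy hv hSQ (by rw [hσ]; linarith)
      (fun j => hS σ s (by rw [hσ]; linarith) (by rw [hσ]; linarith) hs2 (v j) _ _ (hv j)
        (by positivity) (by positivity) hXσ (h2 j) fun i => hp i j) h2 hp
  have Bu := hsob u hu hu2 hZu
  have Bw := hsob w hw hw2 hZw
  have Bb := hsob b hb hb2 hZb
  have hκw : ∀ j, L2Le σ (fun x => κ * w j x) (ζ ^ 2) := fun j => by
    have hwc := (hw j).continuous
    refine ⟨by fun_prop, le_trans ?_ (hdE (fun x => κ * w j x) (by fun_prop) fun x => ?_)⟩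
    · exact setIntegral_mono_set (integrableOn_closedBall (by fun_prop) s)
        (Eventually.of_forall fun x => sq_nonneg _)
        (closedBall_subset_closedBall (by rw [hσ]; linarith)).eventuallyLE
    · have := gradEnergy_nonneg u x
      have := gradEnergy_nonneg w x
      have := gradEnergy_nonneg b x
      have := Finset.single_le_sum (f := fun j => (κ * w j x) ^ 2) (fun _ _ => sq_nonneg _)
        (Finset.mem_univ j)
      unfold energyDensity
      linarith
  obtain ⟨φ, hφ, hφ0, hφ1, hφr, hφs, hφd, hφdd⟩ := hcut r σ hr (by rw [hσ]; linarith)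
    (by rw [hσ]; linarith)
  have hφd' : ∀ i x, |pd i φ x| ≤ c * K := fun i x => (hφd i x).trans_eq (by
    rw [hσr, hK]
    field_simp)
  have hφdd' : ∀ i j x, |pd i (fun y => pd j φ y) x| ≤ c * K ^ 2 := fun i j x =>
    (hφdd i j x).trans_eq (by
      rw [hσr, hK]
      field_simp)
  have hP := hpr hs (hr.trans (by rw [hσ]; linarith)) (by rw [hσ]; linarith) hφ hφs hc hK1 hξ hζ
    hQ0 hδ0 hδ2 hKX hφd' hφdd' Bu Bb hκw
  have hL := L1Le_energyFlux (X := ξ ^ 2) (Z := ζ ^ 2) (Q := Q) (by positivity) (by positivity)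
    hQ0.le Bu Bw Bb hκw
  have hF := sum_setIntegral_pd_mul_energyFlux_le hφ hφd' hL (by positivity)
  have hen := hs.energy_le hφ hφ0 hφs
  have hlow := hs.integral_energyDensity_le (r := r) (σ := σ) hφ hφ0 hφr (by rw [hσ]; linarith)
  have hδ3 : K ≤ K ^ 4 / δ ^ 3 := by
    rw [le_div_iff₀ (by positivity)]
    have h1 : δ ^ 3 ≤ 1 := pow_le_one₀ hδ0.le (by linarith)
    have h2 : K ≤ K ^ 4 := le_self_pow₀ hK1 (by norm_num)
    exact (mul_le_of_le_one_right hK0.le h1).trans h2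
  have hmerge : K * ξ ^ 2 * ζ ^ 2 ≤ K ^ 4 * ξ ^ 2 * ζ ^ 2 / δ ^ 3 := by
    have := mul_le_mul_of_nonneg_right hδ3 (by positivity : 0 ≤ ξ ^ 2 * ζ ^ 2)
    calc _ = K * (ξ ^ 2 * ζ ^ 2) := by ring
      _ ≤ _ := this
      _ = _ := by ring
  have hfin := absorb_errors (A := A) (E := E) (K := K)
    (F := ∫ x in closedBall (0 : E3) r, energyDensity κ u w b x) hM0 hδ0 hK1 hξ hζ hAδ
    (by calc _ = (ζ ^ 2) ^ 2 := by ring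
          _ ≤ _ := hZE
          _ = _ := by ring) (by
      refine hlow.trans (mul_le_mul_of_nonneg_left ((hen.trans (add_le_add hF hP)).trans ?_)
        zero_le_three)
      exact flux_merge hc.le hA0 hS0 (by positivity) (by positivity) hmerge)
  refine hfin.trans (le_of_eq ?_)
  rw [hK]
  field_simp
  ring

end OneStep

theorem le_of_half_iteration {f : ℝ → ℝ} {D F : ℝ} (hD : 0 ≤ D)
    (hF : ∀ r, 1 ≤ r → r < 3 / 2 → f r ≤ F)
    (hf : ∀ r s, 1 ≤ r → r < s → s < 3 / 2 → f r ≤ 2⁻¹ * f s + D / (s - r) ^ 8) :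
    f 1 ≤ 2 ^ 8 * (5 * 20 ^ 8) * D := by
  have key : ∀ n : ℕ, ∀ r, 1 ≤ r → r < 3 / 2 →
      f r ≤ F * 2⁻¹ ^ n + 5 * 20 ^ 8 * D / (3 / 2 - r) ^ 8 := by
    intro n
    induction n with
    | zero =>
      intro r h1 h2
      have h3 : 0 < 3 / 2 - r := by linarith
      have h4 : 0 ≤ 5 * 20 ^ 8 * D / (3 / 2 - r) ^ 8 := by positivity
      linarith [hF r h1 h2]
    | succ n ih =>
      intro r h1 h2
      set d := 3 / 2 - r with hd
      have hd0 : 0 < d := by linarith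
      set s := 3 / 2 - 19 / 20 * d with hs
      have h3 := hf r s h1 (by linarith) (by linarith)
      have h4 := ih s (by linarith) (by linarith)
      have e1 : s - r = d / 20 := by rw [hs, hd]; ring
      have e2 : 3 / 2 - s = 19 / 20 * d := by rw [hs]; ring
      rw [e1] at h3
      rw [e2] at h4
      have e3 : D / (d / 20) ^ 8 = 20 ^ 8 * (D / d ^ 8) := by field_simp
      have e4 : 5 * 20 ^ 8 * D / (19 / 20 * d) ^ 8 = 5 * 20 ^ 8 * (20 / 19) ^ 8 * (D / d ^ 8) := by
        field_simp
      have e5 : 5 * 20 ^ 8 * D / d ^ 8 = 5 * 20 ^ 8 * (D / d ^ 8) := by ring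
      rw [e3] at h3
      rw [e4] at h4
      rw [e5, pow_succ]
      have h5 : 0 ≤ D / d ^ 8 := by positivity
      linarith
  have hlim : Tendsto (fun n : ℕ => F * (2⁻¹ : ℝ) ^ n + 5 * 20 ^ 8 * D / (3 / 2 - 1) ^ 8) atTop
      (𝓝 (F * 0 + 5 * 20 ^ 8 * D / (3 / 2 - 1) ^ 8)) :=
    ((tendsto_pow_atTop_nhds_zero_of_lt_one (by norm_num) (by norm_num)).const_mul F).add_const _
  refine (ge_of_tendsto' hlim fun n => key n 1 le_rfl (by norm_num)).trans (le_of_eq ?_)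
  ring

theorem exists_energyDensity_bound : ∃ C : ℝ, 0 ≤ C ∧
    ∀ {κ : ℝ} {u w b : Fin 3 → E3 → ℝ} {P : E3 → ℝ} {X : ℝ},
    IsDilatedSolution κ u w b P → 0 < X →
    (∀ j, ∫ x in closedBall (0 : E3) (3 / 2), (u j x) ^ 2 ≤ X ^ 2) →
    (∀ j, ∫ x in closedBall (0 : E3) (3 / 2), (w j x) ^ 2 ≤ X ^ 2) →
    (∀ j, ∫ x in closedBall (0 : E3) (3 / 2), (b j x) ^ 2 ≤ X ^ 2) →
    ∫ x in closedBall (0 : E3) 1, energyDensity κ u w b x ≤ C * (X ^ 2 + X ^ 6) := by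
  obtain ⟨C, hC, h⟩ := exists_oneStep
  refine ⟨2 ^ 8 * (5 * 20 ^ 8) * C, by positivity, ?_⟩
  intro κ u w b P X hs hX hu hw hb
  have hdc := hs.continuous_energyDensity
  have hmono : ∀ (g : E3 → ℝ), Continuous g → (∀ x, 0 ≤ g x) → ∀ s, s < 3 / 2 →
      ∫ x in closedBall (0 : E3) s, g x ≤ ∫ x in closedBall (0 : E3) (3 / 2), g x :=
    fun g hg hg0 s hs => setIntegral_mono_set (integrableOn_closedBall hg _)
      (Eventually.of_forall hg0) (closedBall_subset_closedBall hs.le).eventuallyLE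
  have hsq : ∀ v : Fin 3 → E3 → ℝ, (∀ j, SmoothFn (v j)) →
      (∀ j, ∫ x in closedBall (0 : E3) (3 / 2), (v j x) ^ 2 ≤ X ^ 2) → ∀ s, s < 3 / 2 →
      ∀ j, ∫ x in closedBall (0 : E3) s, (v j x) ^ 2 ≤ X ^ 2 := fun v hv hvX s hs j =>
    (hmono _ ((hv j).continuous.pow 2) (fun x => sq_nonneg _) s hs).trans (hvX j)
  have key := le_of_half_iteration
    (f := fun r => ∫ x in closedBall (0 : E3) r, energyDensity κ u w b x)
    (D := C * (X ^ 2 + X ^ 6)) (by positivity)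
    (fun r _ hr => hmono _ hdc (fun x => energyDensity_nonneg x) r hr)
    (fun r s h1 h2 h3 => (h hs hX h1 h2 (by linarith) (hsq u hs.smooth_u hu s h3)
      (hsq w hs.smooth_w hw s h3) (hsq b hs.smooth_b hb s h3)).trans_eq (by ring))
  exact key.trans_eq (by ring)

/-- The components of the dilated field `x ↦ κ v(κ x)`. -/
def dilate (κ : ℝ) (v : E3 → E3) (j : Fin 3) (x : E3) : ℝ := κ * v (κ • x) j

section Dilate

variable {κ : ℝ} {v : E3 → E3}

theorem smoothFn_comp_smul {f : E3 → ℝ} (hf : SmoothFn f) (κ : ℝ) :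
    SmoothFn (fun x => f (κ • x)) :=
  hf.comp (contDiff_const_smul κ)

theorem pd_comp_smul (i : Fin 3) {f : E3 → ℝ} (hf : SmoothFn f) (κ : ℝ) (x : E3) :
    pd i (fun y => f (κ • y)) x = κ * pd i f (κ • x) := by
  simpa using pd_comp_affine i hf κ 0 x

theorem smoothFn_component (hv : ContDiff ℝ (⊤ : ℕ∞) v) (j : Fin 3) :
    SmoothFn (fun y => v y j) :=
  contDiff_euclidean.1 hv j

theorem smoothFn_dilate (hv : ContDiff ℝ (⊤ : ℕ∞) v) (κ : ℝ) (j : Fin 3) :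
    SmoothFn (dilate κ v j) :=
  contDiff_const.mul (smoothFn_comp_smul (smoothFn_component hv j) κ)

theorem pd_dilate (hv : ContDiff ℝ (⊤ : ℕ∞) v) (i j : Fin 3) (x : E3) :
    pd i (dilate κ v j) x = κ ^ 2 * pd i (fun y => v y j) (κ • x) := by
  have h := smoothFn_component hv j
  have e : dilate κ v j = fun y => κ * (fun y => v (κ • y) j) y := rfl
  rw [e, pd_const_mul i κ (smoothFn_comp_smul h κ), pd_comp_smul i h κ]
  ring

theorem pd_pd_dilate (hv : ContDiff ℝ (⊤ : ℕ∞) v) (i k j : Fin 3) (x : E3) :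
    pd i (fun y => pd k (dilate κ v j) y) x
      = κ ^ 3 * pd i (fun y => pd k (fun z => v z j) y) (κ • x) := by
  have h := smoothFn_pd k (smoothFn_component hv j)
  simp_rw [pd_dilate hv]
  rw [pd_const_mul i (κ ^ 2) (smoothFn_comp_smul h κ), pd_comp_smul i h κ]
  ring

theorem lap_dilate (hv : ContDiff ℝ (⊤ : ℕ∞) v) (j : Fin 3) (x : E3) :
    lap (dilate κ v j) x = κ ^ 3 * lap (fun y => v y j) (κ • x) := by
  unfold lap
  rw [Finset.mul_sum]
  exact Finset.sum_congr rfl fun i _ => pd_pd_dilate hv i i j x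

theorem crl_dilate (hv : ContDiff ℝ (⊤ : ℕ∞) v) (j : Fin 3) (x : E3) :
    crl (dilate κ v) j x = κ ^ 2 * curl3 v (κ • x) j := by
  unfold crl curl3
  simp_rw [pd_dilate hv]
  fin_cases j <;> simp <;> ring

theorem sum_mul_pd_dilate {z : E3 → E3} (hz : ContDiff ℝ (⊤ : ℕ∞) z) (j : Fin 3)
    (x : E3) : ∑ i, dilate κ v i x * pd i (dilate κ z j) x
      = κ ^ 3 * ∑ i, v (κ • x) i * pd i (fun y => z y j) (κ • x) := by
  rw [Finset.mul_sum]
  refine Finset.sum_congr rfl fun i _ => ?_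
  rw [pd_dilate hz, dilate]
  ring

theorem sum_pd_dilate (hv : ContDiff ℝ (⊤ : ℕ∞) v) (x : E3) :
    ∑ i, pd i (dilate κ v i) x = κ ^ 2 * vdiv v (κ • x) := by
  unfold vdiv
  rw [Finset.mul_sum]
  exact Finset.sum_congr rfl fun i _ => pd_dilate hv i i x

theorem smoothFn_vdiv (hv : ContDiff ℝ (⊤ : ℕ∞) v) : SmoothFn (vdiv v) := by
  unfold vdiv
  exact ContDiff.sum fun i _ => smoothFn_pd i (smoothFn_component hv i)

theorem gradEnergy_dilate (hv : ContDiff ℝ (⊤ : ℕ∞) v) (x : E3) :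
    gradEnergy (dilate κ v) x = κ ^ 4 * gradSq v (κ • x) := by
  unfold gradEnergy gradSq
  rw [Finset.sum_comm]
  simp_rw [pd_dilate hv, Finset.mul_sum]
  refine Finset.sum_congr rfl fun j _ => Finset.sum_congr rfl fun i _ => ?_
  ring

end Dilate

theorem IsMMPSolution.dilate {u w b : E3 → E3} {P : E3 → ℝ} (h : IsMMPSolution u w b P) (κ : ℝ) :
    IsDilatedSolution κ (dilate κ u) (dilate κ w) (dilate κ b) (fun x => κ ^ 2 * P (κ • x)) := by
  have hu := h.smooth_u
  have hw := h.smooth_w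
  have hb := h.smooth_b
  have hP : SmoothFn P := h.smooth_P
  refine ⟨smoothFn_dilate hu κ, smoothFn_dilate hw κ, smoothFn_dilate hb κ,
    contDiff_const.mul (smoothFn_comp_smul hP κ), fun x j => ?_, fun x j => ?_, fun x j => ?_,
    fun x => ?_, fun x => ?_⟩
  · rw [pd_const_mul j (κ ^ 2) (smoothFn_comp_smul hP κ), pd_comp_smul j hP κ, lap_dilate hu,
      sum_mul_pd_dilate hu, sum_mul_pd_dilate hb, crl_dilate hw]
    linear_combination κ ^ 3 * h.eq_u (κ • x) j
  · simp_rw [sum_pd_dilate hw]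
    rw [pd_const_mul j (κ ^ 2) (smoothFn_comp_smul (smoothFn_vdiv hw) κ),
      pd_comp_smul j (smoothFn_vdiv hw) κ, lap_dilate hw, sum_mul_pd_dilate hw, crl_dilate hu,
      _root_.dilate]
    linear_combination (-κ ^ 3) * h.eq_w (κ • x) j
  · rw [lap_dilate hb, sum_mul_pd_dilate hb, sum_mul_pd_dilate hu]
    linear_combination (-κ ^ 3) * h.eq_b (κ • x) j
  · rw [sum_pd_dilate hu, h.div_u, mul_zero]
  · rw [sum_pd_dilate hb, h.div_b, mul_zero]

theorem setIntegral_closedBall_comp_smul (f : E3 → ℝ) {R ρ : ℝ} (hR : 0 < R) (hρ : 0 ≤ ρ) :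
    ∫ x in closedBall (0 : E3) ρ, f (R • x) = (R ^ 3)⁻¹ * ∫ x in closedBall (0 : E3) (R * ρ), f x := by
  rw [Measure.setIntegral_comp_smul_of_pos volume f _ hR, smul_closedBall _ _ hρ]
  simp [abs_of_pos hR]

theorem sq_le_add_rpow {s l p : ℝ} (hs : 0 ≤ s) (hl : 0 < l) (hp : 2 ≤ p) :
    s ^ 2 ≤ l ^ 2 + l ^ (2 - p) * s ^ p := by
  have h0 : 0 ≤ l ^ (2 - p) * s ^ p := mul_nonneg (rpow_nonneg hl.le _) (rpow_nonneg hs _)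
  rcases le_total s l with h | h
  · have : s ^ 2 ≤ l ^ 2 := by gcongr
    linarith
  · have hs0 : 0 < s := hl.trans_le h
    have h1 : s ^ (2 - p) ≤ l ^ (2 - p) := rpow_le_rpow_of_nonpos hl h (by linarith)
    have h2 : s ^ 2 = s ^ (2 - p) * s ^ p := by
      rw [← rpow_add hs0, sub_add_cancel, rpow_two]
    have h3 : s ^ (2 - p) * s ^ p ≤ l ^ (2 - p) * s ^ p := by gcongr
    nlinarith [sq_nonneg l]

theorem integrableOn_ball3 {f : E3 → ℝ} (hf : Continuous f) (r : ℝ) : IntegrableOn f (ball3 r) :=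
  (integrableOn_closedBall hf r).mono_set ball_subset_closedBall

theorem volume_real_ball3_le {r : ℝ} (hr : 0 ≤ r) : volume.real (ball3 r) ≤ 5 * r ^ 3 := by
  have : volume.real (ball3 r) = r ^ 3 * (π * 4 / 3) := by
    rw [measureReal_def, ball3, EuclideanSpace.volume_ball_fin_three, ENNReal.toReal_mul,
      ENNReal.toReal_pow, ENNReal.toReal_ofReal hr, ENNReal.toReal_ofReal (by positivity)]
  rw [this]
  have h1 : π * 4 / 3 ≤ 5 := by linarith [pi_lt_d2]
  have h2 : 0 ≤ r ^ 3 := by positivity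
  nlinarith

theorem lpnorm_nonneg (p : ℝ) (v : E3 → E3) (S : Set E3) : 0 ≤ lpnorm p v S :=
  rpow_nonneg (integral_nonneg fun _ => rpow_nonneg (norm_nonneg _) _) _

theorem setIntegral_norm_sq_le {p R n : ℝ} {v : E3 → E3} (hp : 2 ≤ p) (hv : Continuous v)
    (hR : 0 < R) (hn : 0 < n) (h : lpnorm p v (ball3 (2 * R)) ≤ n) :
    ∫ x in ball3 (2 * R), ‖v x‖ ^ 2 ≤ 41 * (R ^ (3 - 6 / p) * n ^ 2) := by
  have hp0 : 0 < p := by linarith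
  set l := R ^ (-3 / p) * n with hl
  have hl0 : 0 < l := by positivity
  have hc : Continuous fun x => ‖v x‖ ^ p := hv.norm.rpow_const fun _ => Or.inr hp0.le
  have hI : ∫ x in ball3 (2 * R), ‖v x‖ ^ p ≤ n ^ p := by
    have h0 : 0 ≤ ∫ x in ball3 (2 * R), ‖v x‖ ^ p :=
      integral_nonneg fun _ => rpow_nonneg (norm_nonneg _) _
    have h1 : (lpnorm p v (ball3 (2 * R))) ^ p = ∫ x in ball3 (2 * R), ‖v x‖ ^ p := by
      rw [lpnorm, one_div, rpow_inv_rpow h0 hp0.ne']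
    rw [← h1]
    exact rpow_le_rpow (lpnorm_nonneg _ _ _) h hp0.le
  have e1 : l ^ 2 * R ^ 3 = R ^ (3 - 6 / p) * n ^ 2 := by
    have : R ^ (3 - 6 / p) = (R ^ (-3 / p)) ^ 2 * R ^ 3 := by
      rw [← rpow_natCast (R ^ (-3 / p)) 2, ← rpow_mul hR.le, ← rpow_natCast R 3, ← rpow_add hR]
      congr 1
      push_cast
      ring
    rw [this, hl]
    ring
  have e2 : l ^ (2 - p) * n ^ p = R ^ (3 - 6 / p) * n ^ 2 := by
    rw [hl, mul_rpow (by positivity) hn.le, ← rpow_mul hR.le, mul_assoc, ← rpow_add hn,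
      sub_add_cancel, rpow_two]
    congr 2
    field_simp
    ring
  calc ∫ x in ball3 (2 * R), ‖v x‖ ^ 2
      ≤ ∫ x in ball3 (2 * R), (l ^ 2 + l ^ (2 - p) * ‖v x‖ ^ p) :=
        integral_mono (integrableOn_ball3 (by fun_prop) _) (integrableOn_ball3 (by fun_prop) _)
          fun x => sq_le_add_rpow (norm_nonneg _) hl0 hp
    _ = volume.real (ball3 (2 * R)) * l ^ 2 + l ^ (2 - p) * ∫ x in ball3 (2 * R), ‖v x‖ ^ p := by
        have hi1 : Integrable (fun _ : E3 => l ^ 2) (volume.restrict (ball3 (2 * R))) :=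
          integrableOn_ball3 continuous_const _
        have hi2 : Integrable (fun x => l ^ (2 - p) * ‖v x‖ ^ p)
            (volume.restrict (ball3 (2 * R))) := integrableOn_ball3 (by fun_prop) _
        rw [integral_add hi1 hi2, setIntegral_const, integral_const_mul, smul_eq_mul]
    _ ≤ 5 * (2 * R) ^ 3 * l ^ 2 + l ^ (2 - p) * n ^ p := by
        have := volume_real_ball3_le (r := 2 * R) (by positivity)
        gcongr
    _ = 40 * (l ^ 2 * R ^ 3) + l ^ (2 - p) * n ^ p := by ring
    _ = _ := by rw [e1, e2]; ring

theorem setIntegral_dilate_sq_le {p R n : ℝ} {v : E3 → E3} (hp : 2 ≤ p) (hv : Continuous v)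
    (hR : 0 < R) (hn : 0 < n) (h : lpnorm p v (ball3 (2 * R)) ≤ n) (j : Fin 3) :
    ∫ x in closedBall (0 : E3) (3 / 2), (dilate R v j x) ^ 2 ≤ (7 * (R ^ (1 - 3 / p) * n)) ^ 2 := by
  have hvj : Continuous fun x => v x j := by fun_prop
  have e : ∫ x in closedBall (0 : E3) (3 / 2), (dilate R v j x) ^ 2
      = R⁻¹ * ∫ x in closedBall (0 : E3) (R * (3 / 2)), (v x j) ^ 2 := by
    simp_rw [dilate, mul_pow]
    rw [integral_const_mul,
      setIntegral_closedBall_comp_smul (fun x => (v x j) ^ 2) hR (by norm_num)]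
    field_simp
  have h1 : ∫ x in closedBall (0 : E3) (R * (3 / 2)), (v x j) ^ 2
      ≤ ∫ x in ball3 (2 * R), ‖v x‖ ^ 2 := by
    refine (setIntegral_mono_set (integrableOn_ball3 (f := fun x => (v x j) ^ 2) (by fun_prop) (2 * R))
      (Eventually.of_forall fun x => sq_nonneg _)
      (closedBall_subset_ball (by linarith)).eventuallyLE).trans
      (integral_mono (integrableOn_ball3 (by fun_prop) _) (integrableOn_ball3 (by fun_prop) _)
        fun x => ?_)
    have := abs_coord_le_norm (v x) j
    calc (v x j) ^ 2 = |v x j| ^ 2 := (sq_abs _).symm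
      _ ≤ _ := by gcongr
  have e2 : R⁻¹ * R ^ (3 - 6 / p) = (R ^ (1 - 3 / p)) ^ 2 := by
    rw [← rpow_neg_one, ← rpow_add hR, ← rpow_natCast, ← rpow_mul hR.le]
    congr 1
    push_cast
    ring
  rw [e]
  calc _ ≤ R⁻¹ * (41 * (R ^ (3 - 6 / p) * n ^ 2)) := by
        gcongr
        exact h1.trans (setIntegral_norm_sq_le hp hv hR hn h)
    _ = 41 * (R⁻¹ * R ^ (3 - 6 / p) * n ^ 2) := by ring
    _ = 41 * ((R ^ (1 - 3 / p)) ^ 2 * n ^ 2) := by rw [e2]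
    _ ≤ 49 * ((R ^ (1 - 3 / p)) ^ 2 * n ^ 2) := by gcongr; norm_num
    _ = _ := by ring

theorem continuous_gradSq {v : E3 → E3} (hv : ContDiff ℝ (⊤ : ℕ∞) v) : Continuous (gradSq v) := by
  have := fun i j => (smoothFn_pd i (smoothFn_component hv j)).continuous
  unfold gradSq
  fun_prop

theorem gradSq_nonneg (v : E3 → E3) (x : E3) : 0 ≤ gradSq v x :=
  Finset.sum_nonneg fun _ _ => Finset.sum_nonneg fun _ _ => sq_nonneg _

theorem IsMMPSolution.integral_gradSq_le {u w b : E3 → E3} {P : E3 → ℝ}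
    (h : IsMMPSolution u w b P) {R : ℝ} (hR : 0 < R) :
    ∫ x in ball3 (R / 2), (gradSq u x + gradSq b x + gradSq w x) ≤
      R⁻¹ * ∫ x in closedBall (0 : E3) 1,
        energyDensity R (_root_.dilate R u) (_root_.dilate R w) (_root_.dilate R b) x := by
  have hu := continuous_gradSq h.smooth_u
  have hw := continuous_gradSq h.smooth_w
  have hb := continuous_gradSq h.smooth_b
  have h1 : ∫ x in ball3 (R / 2), (gradSq u x + gradSq b x + gradSq w x)
      ≤ ∫ x in closedBall (0 : E3) (R * 1), (gradSq u x + gradSq b x + gradSq w x) :=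
    setIntegral_mono_set (integrableOn_closedBall (by fun_prop) _)
      (Eventually.of_forall fun x =>
        add_nonneg (add_nonneg (gradSq_nonneg u x) (gradSq_nonneg b x)) (gradSq_nonneg w x))
      (ball_subset_closedBall.trans (closedBall_subset_closedBall (by linarith))).eventuallyLE
  have h2 := setIntegral_closedBall_comp_smul (fun x => gradSq u x + gradSq b x + gradSq w x) hR
    zero_le_one
  have h3 : ∫ x in closedBall (0 : E3) 1, R ^ 4 *
        (gradSq u (R • x) + gradSq b (R • x) + gradSq w (R • x))
      ≤ ∫ x in closedBall (0 : E3) 1,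
        energyDensity R (_root_.dilate R u) (_root_.dilate R w) (_root_.dilate R b) x := by
    refine setIntegral_mono_closedBall (by fun_prop) (h.dilate R).continuous_energyDensity
      fun x _ => ?_
    have := sum_sq_nonneg' (κ := R) (_root_.dilate R w) x
    rw [energyDensity, gradEnergy_dilate h.smooth_u, gradEnergy_dilate h.smooth_w,
      gradEnergy_dilate h.smooth_b]
    linarith
  rw [integral_const_mul, h2] at h3
  refine h1.trans ?_
  calc _ = R⁻¹ * (R ^ 4 * ((R ^ 3)⁻¹ * ∫ x in closedBall (0 : E3) (R * 1),
        (gradSq u x + gradSq b x + gradSq w x))) := by field_simp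
    _ ≤ _ := by gcongr

theorem exists_dirichlet_bound : ∃ C : ℝ, 0 ≤ C ∧ ∀ {p : ℝ} {u w b : E3 → E3} {P : E3 → ℝ}
    {R n : ℝ}, 2 ≤ p → IsMMPSolution u w b P → 0 < R → 0 < n →
    lpnorm p u (ball3 (2 * R)) + lpnorm p b (ball3 (2 * R)) + lpnorm p w (ball3 (2 * R)) ≤ n →
    ∫ x in ball3 (R / 2), (gradSq u x + gradSq b x + gradSq w x) ≤
      C * (R ^ (1 - 6 / p) * n ^ 2 + R ^ (5 - 18 / p) * n ^ 6) := by
  obtain ⟨C, hC, hE⟩ := exists_energyDensity_bound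
  refine ⟨C * 7 ^ 6, by positivity, ?_⟩
  intro p u w b P R n hp hs hR hn h
  have hlu := lpnorm_nonneg p u (ball3 (2 * R))
  have hlw := lpnorm_nonneg p w (ball3 (2 * R))
  have hlb := lpnorm_nonneg p b (ball3 (2 * R))
  have key := hE (X := 7 * (R ^ (1 - 3 / p) * n)) (hs.dilate R) (by positivity)
    (setIntegral_dilate_sq_le hp hs.smooth_u.continuous hR hn (by linarith))
    (setIntegral_dilate_sq_le hp hs.smooth_w.continuous hR hn (by linarith))
    (setIntegral_dilate_sq_le hp hs.smooth_b.continuous hR hn (by linarith))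
  have e2 : R⁻¹ * (R ^ (1 - 3 / p)) ^ 2 = R ^ (1 - 6 / p) := by
    rw [← rpow_neg_one, ← rpow_natCast, ← rpow_mul hR.le, ← rpow_add hR]
    congr 1
    push_cast
    ring
  have e6 : R⁻¹ * (R ^ (1 - 3 / p)) ^ 6 = R ^ (5 - 18 / p) := by
    rw [← rpow_neg_one, ← rpow_natCast, ← rpow_mul hR.le, ← rpow_add hR]
    congr 1
    push_cast
    ring
  refine (hs.integral_gradSq_le hR).trans ?_
  calc _ ≤ R⁻¹ * (C * ((7 * (R ^ (1 - 3 / p) * n)) ^ 2 + (7 * (R ^ (1 - 3 / p) * n)) ^ 6)) := by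
        gcongr
    _ = C * (7 ^ 2 * (R⁻¹ * (R ^ (1 - 3 / p)) ^ 2 * n ^ 2)
        + 7 ^ 6 * (R⁻¹ * (R ^ (1 - 3 / p)) ^ 6 * n ^ 6)) := by ring
    _ = C * (7 ^ 2 * (R ^ (1 - 6 / p) * n ^ 2) + 7 ^ 6 * (R ^ (5 - 18 / p) * n ^ 6)) := by
        rw [e2, e6]
    _ ≤ C * (7 ^ 6 * (R ^ (1 - 6 / p) * n ^ 2) + 7 ^ 6 * (R ^ (5 - 18 / p) * n ^ 6)) := by
        gcongr <;> norm_num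
    _ = _ := by ring

/-- Dirichlet integral estimate for `p ∈ [2, 18/5)`. -/
theorem dirichlet_estimate_low_p
    (p : ℝ) (hp1 : 2 ≤ p) (hp2 : p < 18 / 5) :
    ∃ C : ℝ, 0 < C ∧
      ∀ u w b : E3 → E3, ∀ P : E3 → ℝ, IsMMPSolution u w b P →
      ∀ R : ℝ, 2 < R →
        (∫ x in ball3 (R / 2), (gradSq u x + gradSq b x + gradSq w x)) ≤
          C * (R ^ (1 - 6 / p) *
                (lpnorm p u (ball3 (2 * R)) + lpnorm p b (ball3 (2 * R))
                  + lpnorm p w (ball3 (2 * R))) ^ 2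
              + R ^ (5 - 18 / p) *
                (lpnorm p u (ball3 (2 * R)) + lpnorm p b (ball3 (2 * R))
                  + lpnorm p w (ball3 (2 * R))) ^ 6
              + R ^ (2 - 9 / p) *
                (lpnorm p u (ball3 (2 * R)) + lpnorm p b (ball3 (2 * R))
                  + lpnorm p w (ball3 (2 * R))) ^ 3) := by
  obtain ⟨C, hC, h⟩ := exists_dirichlet_bound
  refine ⟨C + 1, by positivity, fun u w b P hs R hR => ?_⟩
  have hR0 : 0 < R := by linarith
  have hlu := lpnorm_nonneg p u (ball3 (2 * R))
  have hlw := lpnorm_nonneg p w (ball3 (2 * R))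
  have hlb := lpnorm_nonneg p b (ball3 (2 * R))
  set N := lpnorm p u (ball3 (2 * R)) + lpnorm p b (ball3 (2 * R))
    + lpnorm p w (ball3 (2 * R)) with hN
  have hN0 : 0 ≤ N := by positivity
  have hlim : Tendsto (fun n : ℝ => C * (R ^ (1 - 6 / p) * n ^ 2 + R ^ (5 - 18 / p) * n ^ 6))
      (𝓝[>] N) (𝓝 (C * (R ^ (1 - 6 / p) * N ^ 2 + R ^ (5 - 18 / p) * N ^ 6))) :=
    ((by fun_prop : Continuous fun n : ℝ => C * (R ^ (1 - 6 / p) * n ^ 2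
      + R ^ (5 - 18 / p) * n ^ 6)).tendsto N).mono_left nhdsWithin_le_nhds
  have hle := ge_of_tendsto hlim (by
    filter_upwards [self_mem_nhdsWithin] with n hn
    exact h hp1 hs hR0 (hN0.trans_lt hn) (le_of_lt hn))
  have p1 : 0 ≤ R ^ (1 - 6 / p) * N ^ 2 := by positivity
  have p2 : 0 ≤ R ^ (5 - 18 / p) * N ^ 6 := by positivity
  have p3 : 0 ≤ R ^ (2 - 9 / p) * N ^ 3 := by positivity
  have p4 : 0 ≤ C * (R ^ (2 - 9 / p) * N ^ 3) := by positivity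
  linarith
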